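/- arXiv:2309.03782 — 3 statements merged into one kernel-verified Lean document; each statement's English description precedes it below -/
import Mathlib

section
/- Let (U_i)_{i≥1} be a sequence of i.i.d. real-valued random variables with E[U₁]=0, E[U₁²]=σ² and E[U₁⁴]<∞. Let φ be a real number with |φ|<1, and let (v_i)_{i≥1} be a sequence of real numbers with |v_i|≤M₀ for all i, for some constant M₀. Then (1/n)·Σ_{i=1}^n U_i·(Σ_{j=i}^n v_j·φ^{j−i}) converges to 0 almost surely as n→∞. -/
open MeasureTheory ProbabilityTheory Filter Set Topology

/-!
Writing `j = i + k`, the weighted sum is `∑ k < n, φ ^ k • ∑ i ≤ n - k, v (i + k) • U i`. For each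
fixed `k` the inner sum has bounded weights and is `o(n)` almost surely, and its norm is at most
`(sup ‖v‖) * ∑ i ≤ n, ‖U i‖ = O(n)` uniformly in `k`. Since `∑ k, ‖φ‖ ^ k` converges,
dominated convergence for series shows that the whole sum is `o(n)`.

The strong law with bounded weights reduces to Etemadi's law. Along the indices where the weights
take a given value the variables are still pairwise independent and identically distributed, so
weights with finitely many values are fine, and bounded weights are uniform limits of those.
-/

open Asymptotics
open scoped Function

lemma sum_range_filter_eq_sum_range_count_nth {M : Type*} [AddCommMonoid M] (p : ℕ → Prop)
    [DecidablePred p] (f : ℕ → M) (n : ℕ) :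
    ∑ i ∈ Finset.range n with p i, f i = ∑ k ∈ Finset.range (n.count p), f (Nat.nth p k) := by
  induction n with
  | zero => simp
  | succ n ih =>
    by_cases hn : p n
    · rw [Finset.range_add_one, Finset.filter_insert, if_pos hn, Finset.sum_insert (by simp),
        Nat.count_succ, if_pos hn, Finset.sum_range_succ, Nat.nth_count hn, ih, add_comm]
    · rw [Finset.range_add_one, Finset.filter_insert, if_neg hn, Nat.count_succ, if_neg hn,
        add_zero, ih]

lemma sum_Icc_sum_Icc_smul_eq {R M : Type*} [CommSemiring R] [AddCommMonoid M] [Module R M]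
    (φ : R) (v : ℕ → R) (x : ℕ → M) (n : ℕ) :
    ∑ i ∈ Finset.Icc 1 n, (∑ j ∈ Finset.Icc i n, v j * φ ^ (j - i)) • x i =
      ∑ k ∈ Finset.range n, φ ^ k • ∑ i ∈ Finset.range (n - k), v (i + 1 + k) • x (i + 1) := by
  simp only [← Finset.Ico_add_one_right_eq_Icc, Finset.sum_Ico_eq_sum_range, Finset.sum_smul,
    Finset.smul_sum, smul_smul]
  rw [Finset.sum_comm' (t' := Finset.range n) (s' := fun k ↦ Finset.range (n - k))
    (by simp only [Finset.mem_range]; omega)]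
  simp only [add_tsub_cancel_left, mul_comm, add_comm 1]

section Deterministic

variable {E : Type*} [NormedAddCommGroup E]

section Averages

variable [NormedSpace ℝ E] {f : ℕ → E}

lemma natCast_smul_inv_smul_eventuallyEq (f : ℕ → E) :
    (fun n : ℕ ↦ (n : ℝ) • (n : ℝ)⁻¹ • f n) =ᶠ[atTop] f := by
  filter_upwards [eventually_ne_atTop 0] with n hn
  exact smul_inv_smul₀ (Nat.cast_ne_zero.2 hn) (f n)

lemma isLittleO_natCast_of_tendsto_inv_smul
    (hf : Tendsto (fun n : ℕ ↦ (n : ℝ)⁻¹ • f n) atTop (𝓝 0)) :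
    f =o[atTop] (fun n ↦ (n : ℝ)) :=
  ((isBigO_refl (fun n : ℕ ↦ (n : ℝ)) atTop).smul_isLittleO ((isLittleO_one_iff ℝ).2 hf)).congr'
    (natCast_smul_inv_smul_eventuallyEq f) (by simp)

lemma isBigO_natCast_of_tendsto_inv_smul {y : E}
    (hf : Tendsto (fun n : ℕ ↦ (n : ℝ)⁻¹ • f n) atTop (𝓝 y)) :
    f =O[atTop] (fun n ↦ (n : ℝ)) :=
  ((isBigO_refl (fun n : ℕ ↦ (n : ℝ)) atTop).smul (hf.isBigO_one ℝ)).congr'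
    (natCast_smul_inv_smul_eventuallyEq f) (by simp)

end Averages

lemma isLittleO_sum_range_filter_of_finite (x : ℕ → E) {p : ℕ → Prop} [DecidablePred p]
    (hp : {i | p i}.Finite) :
    (fun n ↦ ∑ i ∈ Finset.range n with p i, x i) =o[atTop] (fun n ↦ (n : ℝ)) := by
  have hbound (n : ℕ) : ‖∑ i ∈ Finset.range n with p i, x i‖ ≤ ∑ i ∈ hp.toFinset, ‖x i‖ :=
    (norm_sum_le _ _).trans <| Finset.sum_le_sum_of_subset_of_nonneg
      (fun i hi ↦ by simpa using (Finset.mem_filter.1 hi).2) fun _ _ _ ↦ norm_nonneg _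
  have hbigO : (fun n ↦ ∑ i ∈ Finset.range n with p i, x i) =O[atTop] (fun _ ↦ (1 : ℝ)) :=
    .of_bound _ <| .of_forall fun n ↦ by simpa using hbound n
  exact hbigO.trans_isLittleO (isLittleO_const_left.2 <| .inr <|
    tendsto_norm_atTop_atTop.comp tendsto_natCast_atTop_atTop)

lemma isLittleO_sum_range_filter_of_infinite {x : ℕ → E} {p : ℕ → Prop} [DecidablePred p]
    (hp : {i | p i}.Infinite)
    (hx : (fun n ↦ ∑ k ∈ Finset.range n, x (Nat.nth p k)) =o[atTop] (fun n ↦ (n : ℝ))) :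
    (fun n ↦ ∑ i ∈ Finset.range n with p i, x i) =o[atTop] (fun n ↦ (n : ℝ)) := by
  have hcount : Tendsto (Nat.count p) atTop atTop :=
    tendsto_atTop_atTop_of_monotone (Nat.count_monotone p)
      fun b ↦ ⟨Nat.nth p b, (Nat.count_nth_of_infinite hp b).ge⟩
  have hcount_le : (fun n ↦ (Nat.count p n : ℝ)) =O[atTop] (fun n ↦ (n : ℝ)) :=
    .of_norm_le fun n ↦ by simpa using Nat.count_le p
  simp only [sum_range_filter_eq_sum_range_count_nth]
  exact (hx.comp_tendsto hcount).trans_isBigO hcount_le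

lemma isLittleO_sum_of_dominated {ι α : Type*} {l : Filter α} {f : ι → α → E} {g : α → ℝ}
    {b : ι → ℝ} (hb : Summable b) (hf : ∀ k, f k =o[l] g) (hfb : ∀ k a, ‖f k a‖ ≤ b k * ‖g a‖)
    (s : α → Finset ι) :
    (fun a ↦ ∑ k ∈ s a, f k a) =o[l] g := by
  -- Where `g a = 0` the ratio is `0`, which a negative `b k` would not dominate.
  have hratio_le (a : α) (k : ι) : ‖f k a‖ / ‖g a‖ ≤ |b k| :=
    div_le_of_le_mul₀ (norm_nonneg _) (abs_nonneg _) <|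
      (hfb k a).trans <| mul_le_mul_of_nonneg_right (le_abs_self _) (norm_nonneg _)
  have hratio_nonneg (a : α) (k : ι) : 0 ≤ ‖f k a‖ / ‖g a‖ := by positivity
  have htsum : Tendsto (fun a ↦ ∑' k, ‖f k a‖ / ‖g a‖) l (𝓝 0) := by
    simpa using tendsto_tsum_of_dominated_convergence hb.abs
      (fun k ↦ (hf k).norm_norm.tendsto_div_nhds_zero)
      (.of_forall fun a k ↦ by simpa only [norm_div, norm_norm] using hratio_le a k)
  have hsum_le (a : α) : ‖∑ k ∈ s a, f k a‖ / ‖g a‖ ≤ ∑' k, ‖f k a‖ / ‖g a‖ :=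
    calc ‖∑ k ∈ s a, f k a‖ / ‖g a‖
      _ ≤ ∑ k ∈ s a, ‖f k a‖ / ‖g a‖ := by
        rw [← Finset.sum_div]
        gcongr
        exact norm_sum_le _ _
      _ ≤ ∑' k, ‖f k a‖ / ‖g a‖ :=
        (hb.abs.of_nonneg_of_le (hratio_nonneg a) (hratio_le a)).sum_le_tsum _
          fun k _ ↦ hratio_nonneg a k
  have hzero (a : α) (ha : ‖g a‖ = 0) : ‖∑ k ∈ s a, f k a‖ = 0 := by
    rw [Finset.sum_eq_zero fun k _ ↦ by simpa [ha] using hfb k a, norm_zero]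
  exact .of_norm_norm <| isLittleO_of_tendsto hzero <|
    squeeze_zero (fun a ↦ by positivity) hsum_le htsum

section WeightedSums

variable {𝕜 : Type*} [NormedField 𝕜] [NormedSpace 𝕜 E]

lemma isLittleO_sum_smul_of_forall_approx {x : ℕ → E} {c : ℕ → 𝕜}
    (hx : (fun n ↦ ∑ i ∈ Finset.range n, ‖x i‖) =O[atTop] (fun n ↦ (n : ℝ)))
    (hc : ∀ ε > 0, ∃ c' : ℕ → 𝕜, (∀ i, ‖c i - c' i‖ ≤ ε) ∧
      (fun n ↦ ∑ i ∈ Finset.range n, c' i • x i) =o[atTop] (fun n ↦ (n : ℝ))) :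
    (fun n ↦ ∑ i ∈ Finset.range n, c i • x i) =o[atTop] (fun n ↦ (n : ℝ)) := by
  obtain ⟨C, hC, hxC⟩ := hx.exists_pos
  refine isLittleO_iff.2 fun ε hε ↦ ?_
  obtain ⟨c', hcc', hc'⟩ := hc (ε / 2 / C) (by positivity)
  filter_upwards [hxC.bound, isLittleO_iff.1 hc' (half_pos hε)] with n hn hn'
  have herror : ‖∑ i ∈ Finset.range n, (c i - c' i) • x i‖ ≤ ε / 2 * ‖(n : ℝ)‖ :=
    calc ‖∑ i ∈ Finset.range n, (c i - c' i) • x i‖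
      _ ≤ ∑ i ∈ Finset.range n, ε / 2 / C * ‖x i‖ := norm_sum_le_of_le _ fun i _ ↦ by
        rw [norm_smul]
        gcongr
        exact hcc' i
      _ = ε / 2 / C * ‖∑ i ∈ Finset.range n, ‖x i‖‖ := by
        rw [← Finset.mul_sum, Real.norm_of_nonneg (by positivity)]
      _ ≤ ε / 2 / C * (C * ‖(n : ℝ)‖) := by gcongr
      _ = ε / 2 * ‖(n : ℝ)‖ := by field_simp
  calc ‖∑ i ∈ Finset.range n, c i • x i‖
    _ = ‖∑ i ∈ Finset.range n, (c i - c' i) • x i + ∑ i ∈ Finset.range n, c' i • x i‖ := by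
      simp only [sub_smul, Finset.sum_sub_distrib, sub_add_cancel]
    _ ≤ ε / 2 * ‖(n : ℝ)‖ + ε / 2 * ‖(n : ℝ)‖ := norm_add_le_of_le herror hn'
    _ = ε * ‖(n : ℝ)‖ := by ring

lemma isLittleO_sum_geometric_smul_of_forall_shift {x : ℕ → E} {φ : 𝕜} (hφ : ‖φ‖ < 1) {v : ℕ → 𝕜}
    {M : ℝ} (hv : ∀ i, ‖v i‖ ≤ M)
    (hx : (fun n ↦ ∑ i ∈ Finset.range n, ‖x (i + 1)‖) =O[atTop] (fun n ↦ (n : ℝ)))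
    (hvx : ∀ k, (fun n ↦ ∑ i ∈ Finset.range n, v (i + 1 + k) • x (i + 1)) =o[atTop]
      (fun n ↦ (n : ℝ))) :
    (fun n ↦ ∑ i ∈ Finset.Icc 1 n, (∑ j ∈ Finset.Icc i n, v j * φ ^ (j - i)) • x i) =o[atTop]
      (fun n ↦ (n : ℝ)) := by
  obtain ⟨C, hC⟩ := (isBigO_nat_atTop_iff (by simp)).1 hx
  have hsub_le (k : ℕ) : (fun n ↦ ((n - k : ℕ) : ℝ)) =O[atTop] (fun n ↦ (n : ℝ)) :=
    .of_norm_le fun n ↦ by simp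
  have hM : 0 ≤ M := (norm_nonneg _).trans (hv 0)
  have hbound (k n : ℕ) :
      ‖φ ^ k • ∑ i ∈ Finset.range (n - k), v (i + 1 + k) • x (i + 1)‖ ≤
        ‖φ‖ ^ k * (M * C) * ‖(n : ℝ)‖ :=
    calc ‖φ ^ k • ∑ i ∈ Finset.range (n - k), v (i + 1 + k) • x (i + 1)‖
      _ = ‖φ‖ ^ k * ‖∑ i ∈ Finset.range (n - k), v (i + 1 + k) • x (i + 1)‖ := by
        rw [norm_smul, norm_pow]
      _ ≤ ‖φ‖ ^ k * ∑ i ∈ Finset.range (n - k), M * ‖x (i + 1)‖ := by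
        gcongr
        exact norm_sum_le_of_le _ fun i _ ↦ by rw [norm_smul]; gcongr; exact hv _
      _ ≤ ‖φ‖ ^ k * ∑ i ∈ Finset.range n, M * ‖x (i + 1)‖ := by
        gcongr
        exact Nat.sub_le n k
      _ ≤ ‖φ‖ ^ k * (M * (C * ‖(n : ℝ)‖)) := by
        rw [← Finset.mul_sum]
        gcongr
        exact (le_abs_self _).trans (hC n)
      _ = ‖φ‖ ^ k * (M * C) * ‖(n : ℝ)‖ := by ring
  simp only [sum_Icc_sum_Icc_smul_eq]
  exact isLittleO_sum_of_dominated
    ((summable_geometric_of_lt_one (norm_nonneg φ) hφ).mul_right (M * C))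
    (fun k ↦ (((hvx k).comp_tendsto (tendsto_sub_atTop_nat k)).trans_isBigO
      (hsub_le k)).const_smul_left (φ ^ k)) hbound Finset.range

end WeightedSums

end Deterministic

lemma exists_finite_range_forall_dist_lt {α ι : Type*} [PseudoMetricSpace α] {c : ι → α}
    (hc : TotallyBounded (range c)) {ε : ℝ} (hε : 0 < ε) :
    ∃ c' : ι → α, (range c').Finite ∧ ∀ i, dist (c i) (c' i) < ε := by
  obtain ⟨t, ht, hct⟩ := Metric.totallyBounded_iff.1 hc ε hε
  have hnear (i : ι) : ∃ y ∈ t, dist (c i) y < ε := by simpa using hct (mem_range_self i)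
  choose c' hc't hcc' using hnear
  exact ⟨c', ht.subset (range_subset_iff.2 hc't), hcc'⟩

lemma integrable_of_integrable_pow_of_even {Ω : Type*} [MeasurableSpace Ω] {μ : Measure Ω}
    [IsFiniteMeasure μ] {f : Ω → ℝ} (hf : AEStronglyMeasurable f μ) {n : ℕ} (hn : Even n)
    (hn0 : n ≠ 0) (hint : Integrable (fun ω ↦ f ω ^ n) μ) : Integrable f μ := by
  have hnorm : Integrable (fun ω ↦ ‖f ω‖ ^ n) μ := by simpa only [Real.norm_eq_abs, hn.pow_abs]
  rw [← integrable_norm_iff hf]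
  simpa only [pow_one] using integrable_norm_pow_of_le hf (Nat.one_le_iff_ne_zero.2 hn0) hnorm

section StrongLaw

variable {Ω E : Type*} [MeasurableSpace Ω] {μ : Measure Ω} [NormedAddCommGroup E]
  [MeasurableSpace E] [BorelSpace E] {X : ℕ → Ω → E} {Y : Ω → E}

lemma ae_isBigO_sum_range_norm (hY : Integrable Y μ)
    (hindep : Pairwise ((· ⟂ᵢ[μ] ·) on X)) (hident : ∀ i, IdentDistrib (X i) Y μ μ) :
    ∀ᵐ ω ∂μ, (fun n ↦ ∑ i ∈ Finset.range n, ‖X i ω‖) =O[atTop] (fun n ↦ (n : ℝ)) := by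
  filter_upwards [strong_law_ae (fun i ω ↦ ‖X i ω‖) ((hident 0).integrable_iff.2 hY).norm
    (fun i j hij ↦ (hindep hij).comp measurable_norm measurable_norm)
    fun i ↦ ((hident i).trans (hident 0).symm).norm] with ω hω
  exact isBigO_natCast_of_tendsto_inv_smul hω

variable [NormedSpace ℝ E] [CompleteSpace E]

lemma ae_isLittleO_sum_range (hY : Integrable Y μ) (hY0 : μ[Y] = 0)
    (hindep : Pairwise ((· ⟂ᵢ[μ] ·) on X)) (hident : ∀ i, IdentDistrib (X i) Y μ μ) :
    ∀ᵐ ω ∂μ, (fun n ↦ ∑ i ∈ Finset.range n, X i ω) =o[atTop] (fun n ↦ (n : ℝ)) := by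
  filter_upwards [strong_law_ae X ((hident 0).integrable_iff.2 hY) hindep
    fun i ↦ (hident i).trans (hident 0).symm] with ω hω
  rw [(hident 0).integral_eq, hY0] at hω
  exact isLittleO_natCast_of_tendsto_inv_smul hω

lemma ae_isLittleO_sum_range_filter (hY : Integrable Y μ) (hY0 : μ[Y] = 0)
    (hindep : Pairwise ((· ⟂ᵢ[μ] ·) on X)) (hident : ∀ i, IdentDistrib (X i) Y μ μ)
    (p : ℕ → Prop) [DecidablePred p] :
    ∀ᵐ ω ∂μ, (fun n ↦ ∑ i ∈ Finset.range n with p i, X i ω) =o[atTop] (fun n ↦ (n : ℝ)) := by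
  by_cases hp : {i | p i}.Finite
  · exact ae_of_all _ fun ω ↦ isLittleO_sum_range_filter_of_finite (X · ω) hp
  · filter_upwards [ae_isLittleO_sum_range hY hY0
      (hindep.comp_of_injective (Nat.nth_injective hp)) fun k ↦ hident (Nat.nth p k)] with ω hω
    exact isLittleO_sum_range_filter_of_infinite hp hω

variable {𝕜 : Type*} [NormedField 𝕜] [NormedSpace 𝕜 E] {c : ℕ → 𝕜}

lemma ae_isLittleO_sum_smul_of_finite_range (hY : Integrable Y μ) (hY0 : μ[Y] = 0)
    (hindep : Pairwise ((· ⟂ᵢ[μ] ·) on X)) (hident : ∀ i, IdentDistrib (X i) Y μ μ)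
    (hc : (range c).Finite) :
    ∀ᵐ ω ∂μ, (fun n ↦ ∑ i ∈ Finset.range n, c i • X i ω) =o[atTop] (fun n ↦ (n : ℝ)) := by
  classical
  filter_upwards [(ae_ball_iff hc.countable).2 fun r _ ↦
    ae_isLittleO_sum_range_filter hY hY0 hindep hident (c · = r)] with ω hω
  have hfiber (n : ℕ) : ∑ i ∈ Finset.range n, c i • X i ω =
      ∑ r ∈ hc.toFinset, r • ∑ i ∈ Finset.range n with c i = r, X i ω := by
    rw [← Finset.sum_fiberwise_of_maps_to (t := hc.toFinset) (g := c) (by simp)]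
    refine Finset.sum_congr rfl fun r _ ↦ ?_
    rw [Finset.smul_sum]
    exact Finset.sum_congr rfl fun i hi ↦ by rw [(Finset.mem_filter.1 hi).2]
  simp only [hfiber]
  exact .fun_sum fun r hr ↦ (hω r (hc.mem_toFinset.1 hr)).const_smul_left r

theorem ae_isLittleO_sum_smul_of_totallyBounded (hY : Integrable Y μ) (hY0 : μ[Y] = 0)
    (hindep : Pairwise ((· ⟂ᵢ[μ] ·) on X)) (hident : ∀ i, IdentDistrib (X i) Y μ μ)
    (hc : TotallyBounded (range c)) :
    ∀ᵐ ω ∂μ, (fun n ↦ ∑ i ∈ Finset.range n, c i • X i ω) =o[atTop] (fun n ↦ (n : ℝ)) := by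
  choose c' hc'_finite hcc' using fun m : ℕ ↦
    exists_finite_range_forall_dist_lt hc (Nat.one_div_pos_of_nat (α := ℝ) (n := m))
  filter_upwards [ae_isBigO_sum_range_norm hY hindep hident, ae_all_iff.2 fun m ↦
    ae_isLittleO_sum_smul_of_finite_range hY hY0 hindep hident (hc'_finite m)] with ω hnorm hω
  refine isLittleO_sum_smul_of_forall_approx hnorm fun ε hε ↦ ?_
  obtain ⟨m, hm⟩ := exists_nat_one_div_lt hε
  exact ⟨c' m, fun i ↦ by simpa only [dist_eq_norm] using ((hcc' m i).trans hm).le, hω m⟩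

theorem stmt0_general [ProperSpace 𝕜] {U : ℕ → Ω → E} (hUint : Integrable (U 1) μ)
    (hUmean : μ[U 1] = 0) (hUindep : Pairwise ((· ⟂ᵢ[μ] ·) on U))
    (hUident : ∀ i, IdentDistrib (U i) (U 1) μ μ)
    {φ : 𝕜} (hφ : ‖φ‖ < 1) {M : ℝ} {v : ℕ → 𝕜} (hv : ∀ i, ‖v i‖ ≤ M) :
    ∀ᵐ ω ∂μ, Tendsto (fun n : ℕ ↦ (n : ℝ)⁻¹ • ∑ i ∈ Finset.Icc 1 n,
      (∑ j ∈ Finset.Icc i n, v j * φ ^ (j - i)) • U i ω) atTop (𝓝 0) := by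
  have hindep : Pairwise ((· ⟂ᵢ[μ] ·) on fun i ↦ U (i + 1)) :=
    hUindep.comp_of_injective (add_left_injective 1)
  have hident (i : ℕ) : IdentDistrib (U (i + 1)) (U 1) μ μ := hUident (i + 1)
  have hv_range (k : ℕ) : TotallyBounded (range fun i ↦ v (i + 1 + k)) :=
    (isCompact_closedBall (0 : 𝕜) M).totallyBounded.subset <|
      range_subset_iff.2 fun i ↦ mem_closedBall_zero_iff.2 (hv _)
  filter_upwards [ae_isBigO_sum_range_norm hUint hindep hident, ae_all_iff.2 fun k ↦
    ae_isLittleO_sum_smul_of_totallyBounded hUint hUmean hindep hident (hv_range k)] with ω hnorm hω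
  exact (isLittleO_sum_geometric_smul_of_forall_shift hφ hv hnorm hω).tendsto_inv_smul_nhds_zero

end StrongLaw

/-- For i.i.d. mean-zero random variables `U` with finite fourth moment,
`|φ| < 1`, and a uniformly bounded real sequence `v`,
`(1/n) ∑_{i=1}^n U_i (∑_{j=i}^n v_j φ^(j-i))` converges to `0` almost surely. -/
theorem stmt0 {Ω : Type*} [MeasurableSpace Ω] (μ : Measure Ω) [IsProbabilityMeasure μ]
    (U : ℕ → Ω → ℝ) (hUmeas : ∀ i, Measurable (U i))
    (hUindep : iIndepFun U μ)
    (hUident : ∀ i, μ.map (U i) = μ.map (U 1))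
    (σ : ℝ)
    (hUmean : ∫ ω, U 1 ω ∂μ = 0)
    (hUvar : ∫ ω, (U 1 ω) ^ 2 ∂μ = σ ^ 2)
    (hU4 : Integrable (fun ω => (U 1 ω) ^ 4) μ)
    (φ : ℝ) (hφ : |φ| < 1)
    (M₀ : ℝ) (v : ℕ → ℝ) (hv : ∀ i, |v i| ≤ M₀) :
    ∀ᵐ ω ∂μ, Tendsto (fun n : ℕ =>
      (1 / (n : ℝ)) * ∑ i ∈ Finset.Icc 1 n,
        U i ω * (∑ j ∈ Finset.Icc i n, v j * φ ^ (j - i)))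
      atTop (𝓝 0) := by
  simpa only [one_div, smul_eq_mul, mul_comm (U _ _)] using stmt0_general (U := U) (v := v)
    (integrable_of_integrable_pow_of_even (hUmeas 1).aestronglyMeasurable (by decide)
      four_ne_zero hU4) hUmean (fun _ _ hij ↦ hUindep.indepFun hij)
    (fun i ↦ ⟨(hUmeas i).aemeasurable, (hUmeas 1).aemeasurable, hUident i⟩) hφ hv
end

section
/- Let (v_i)_{i≥1} be a sequence of real numbers with |v_i|≤M₀ for all i, for some constant M₀. Then (1/n)·Σ_{i=1}^n v_i·ε_i converges to 0 almost surely as n→∞. -/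
open MeasureTheory ProbabilityTheory Filter Set Topology

/-!
The average of `v_i ε_i` is the series over `j` of `φ ^ j` times the average of `v_i U_{i-j}`, and
the limit is taken term by term. Each term tends to `0` by a strong law of large numbers with
bounded weights, and Tannery's theorem applies because the average of `|U_{i-j}|` is at most
`C (j + 1)`: shifting the window by `j` only adds `j` terms from the past, and averages of `|U|` are
bounded in both directions of time.

The weighted strong law is easy for bounded variables, where the weights can be absorbed: the second
moments of the averages are summable along the squares, and bounded increments fill the gaps. For
integrable variables `X_i`, choose a bounded continuous `g` with `E[g(X_0)] = 0` and
`E|X_0 - g(X_0)| < δ`; the error made by replacing `X_i` with `g(X_i)` is controlled by the ordinary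
strong law.
-/

theorem eventually_succ_sq_le_mul_sq {a : ℝ} (ha : 1 < a) :
    ∀ᶠ n : ℕ in atTop, (n + 1 : ℝ) ^ 2 ≤ a * n ^ 2 := by
  have hlim : Tendsto (fun n : ℕ => (1 + 1 / (n : ℝ)) ^ 2) atTop (𝓝 1) := by
    simpa using (tendsto_one_div_atTop_nhds_zero_nat (𝕜 := ℝ)).const_add 1 |>.pow 2
  filter_upwards [hlim.eventually_lt_const ha, eventually_gt_atTop 0] with n hn hn_pos
  calc (n + 1 : ℝ) ^ 2 = (1 + 1 / (n : ℝ)) ^ 2 * n ^ 2 := by field_simp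
    _ ≤ a * n ^ 2 := by gcongr

theorem tendsto_average_of_tendsto_average_sq {x : ℕ → ℝ} {C : ℝ} (hx : ∀ i, |x i| ≤ C)
    (hlim : Tendsto (fun n : ℕ => (∑ i ∈ Finset.range (n ^ 2), x i) / (n ^ 2 : ℕ)) atTop (𝓝 0)) :
    Tendsto (fun n : ℕ => (∑ i ∈ Finset.range n, x i) / n) atTop (𝓝 0) := by
  -- Adding `C` to every term makes the partial sums monotone.
  set S : ℕ → ℝ := fun n => ∑ i ∈ Finset.range n, (x i + C) with hS
  have hS_mono : Monotone S := monotone_nat_of_le_succ fun n => by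
    simp only [hS, Finset.sum_range_succ]
    linarith [neg_le_of_abs_le (hx n)]
  have hS_div {n : ℕ} (hn : n ≠ 0) : S n / n = (∑ i ∈ Finset.range n, x i) / n + C := by
    simp only [hS, Finset.sum_add_distrib, Finset.sum_const, Finset.card_range, nsmul_eq_mul]
    field_simp
  have hS_lim : Tendsto (fun n : ℕ => S n / n) atTop (𝓝 C) := by
    refine tendsto_div_of_monotone_of_exists_subseq_tendsto_div S C hS_mono fun a ha =>
      ⟨fun n => n ^ 2, mod_cast eventually_succ_sq_le_mul_sq ha, tendsto_pow_atTop two_ne_zero, ?_⟩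
    refine (zero_add C ▸ hlim.add_const C).congr' ?_
    filter_upwards [eventually_ne_atTop 0] with n hn
    exact (hS_div (pow_ne_zero 2 hn)).symm
  refine (sub_self C ▸ hS_lim.sub_const C).congr' ?_
  filter_upwards [eventually_ne_atTop 0] with n hn
  rw [hS_div hn, add_sub_cancel_right]

theorem abs_sum_mul_div_le {ι : Type*} {s : Finset ι} {v x : ι → ℝ} {M c : ℝ}
    (hv : ∀ i ∈ s, |v i| ≤ M) (hc : 0 ≤ c) :
    |(∑ i ∈ s, v i * x i) / c| ≤ M * ((∑ i ∈ s, |x i|) / c) := by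
  rw [abs_div, abs_of_nonneg hc, ← mul_div_assoc, Finset.mul_sum]
  gcongr
  refine (Finset.abs_sum_le_sum_abs _ _).trans (Finset.sum_le_sum fun i hi => ?_)
  rw [abs_mul]
  gcongr
  exact hv i hi

theorem tendsto_weighted_average_of_approx {v x : ℕ → ℝ} {M : ℝ} (hv : ∀ i, |v i| ≤ M)
    (happrox : ∀ δ > 0, ∃ y : ℕ → ℝ, ∃ γ < δ,
      Tendsto (fun n : ℕ => (∑ i ∈ Finset.range n, v i * y i) / n) atTop (𝓝 0) ∧
      Tendsto (fun n : ℕ => (∑ i ∈ Finset.range n, |x i - y i|) / n) atTop (𝓝 γ)) :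
    Tendsto (fun n : ℕ => (∑ i ∈ Finset.range n, v i * x i) / n) atTop (𝓝 0) := by
  have hM : 0 ≤ M := (abs_nonneg _).trans (hv 0)
  rw [Metric.tendsto_nhds]
  intro η hη
  obtain ⟨y, γ, hγ, hy, hxy⟩ := happrox (η / (M + 1)) (by positivity)
  have hMγ : 0 + M * γ < η := by
    have : M * (η / (M + 1)) < η := by rw [← mul_div_assoc, div_lt_iff₀ (by positivity)]; linarith
    nlinarith
  have hbound := (abs_zero (α := ℝ) ▸ hy.abs).add (hxy.const_mul M)
  filter_upwards [hbound.eventually_lt_const hMγ] with n hn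
  rw [Real.dist_0_eq_abs]
  calc |(∑ i ∈ Finset.range n, v i * x i) / n|
      = |(∑ i ∈ Finset.range n, v i * y i) / n +
          (∑ i ∈ Finset.range n, v i * (x i - y i)) / n| := by
        simp only [← add_div, ← Finset.sum_add_distrib, ← mul_add, add_sub_cancel]
    _ ≤ |(∑ i ∈ Finset.range n, v i * y i) / n| +
          |(∑ i ∈ Finset.range n, v i * (x i - y i)) / n| := abs_add_le _ _
    _ ≤ |(∑ i ∈ Finset.range n, v i * y i) / n| +
          M * ((∑ i ∈ Finset.range n, |x i - y i|) / n) := by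
        gcongr
        exact abs_sum_mul_div_le (fun i _ => hv i) n.cast_nonneg
    _ < η := hn

theorem tendsto_average_of_hasSum {a b : ℕ → ℝ} {x : ℕ → ℕ → ℝ} {y : ℕ → ℝ}
    (hab : Summable fun j => |a j| * b j) (hxy : ∀ i, HasSum (fun j => a j * x j i) (y i))
    (hb : ∀ j n : ℕ, |(∑ i ∈ Finset.range n, x j i) / n| ≤ b j)
    (hx : ∀ j, Tendsto (fun n : ℕ => (∑ i ∈ Finset.range n, x j i) / n) atTop (𝓝 0)) :
    Tendsto (fun n : ℕ => (∑ i ∈ Finset.range n, y i) / n) atTop (𝓝 0) := by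
  have hseries (n : ℕ) : ∑' j, a j * ((∑ i ∈ Finset.range n, x j i) / n) =
      (∑ i ∈ Finset.range n, y i) / n := by
    refine HasSum.tsum_eq ?_
    simpa only [← Finset.mul_sum, mul_div_assoc] using
      (hasSum_sum (s := Finset.range n) fun i _ => hxy i).div_const (n : ℝ)
  have htannery := tendsto_tsum_of_dominated_convergence hab
    (fun j => (hx j).const_mul (a j)) (Eventually.of_forall fun n j => by
      rw [Real.norm_eq_abs, abs_mul]
      exact mul_le_mul_of_nonneg_left (hb j n) (abs_nonneg _))
  simpa only [hseries, mul_zero, tsum_zero] using htannery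

theorem sum_range_shift_le {G : Type*} [AddCommGroup G] [PartialOrder G] [IsOrderedAddMonoid G]
    {w : ℤ → G} (hw : ∀ i, 0 ≤ w i) (j n : ℕ) :
    ∑ i ∈ Finset.range n, w (i + 1 - j) ≤
      ∑ i ∈ Finset.range n, w (i + 1) + ∑ k ∈ Finset.range j, w (-k) := by
  induction j with
  | zero => simp
  | succ j ih =>
    have hreindex : ∑ i ∈ Finset.range n, w (i + 1 - (j + 1 : ℕ)) + w (n - j) =
        ∑ i ∈ Finset.range n, w (i + 1 - j) + w (-j) := by
      have := Finset.sum_range_succ' (fun i : ℕ => w (i - j)) n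
      rw [Finset.sum_range_succ] at this
      simpa using this
    calc ∑ i ∈ Finset.range n, w (i + 1 - (j + 1 : ℕ))
        ≤ ∑ i ∈ Finset.range n, w (i + 1 - j) + w (-j) :=
          hreindex ▸ le_add_of_nonneg_right (hw _)
      _ ≤ ∑ i ∈ Finset.range n, w (i + 1) + ∑ k ∈ Finset.range (j + 1), w (-k) := by
          rw [Finset.sum_range_succ, ← add_assoc]
          gcongr

theorem exists_shifted_average_le {w : ℤ → ℝ} (hw : ∀ i, 0 ≤ w i) {l l' : ℝ}
    (hfuture : Tendsto (fun n : ℕ => (∑ i ∈ Finset.range n, w (i + 1)) / n) atTop (𝓝 l))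
    (hpast : Tendsto (fun n : ℕ => (∑ i ∈ Finset.range n, w (-i)) / n) atTop (𝓝 l')) :
    ∃ C, ∀ j n : ℕ, (∑ i ∈ Finset.range n, w (i + 1 - j)) / n ≤ C * (j + 1) := by
  obtain ⟨A, hA⟩ := hfuture.bddAbove_range
  obtain ⟨B, hB⟩ := hpast.bddAbove_range
  rw [mem_upperBounds, forall_mem_range] at hA hB
  have hA_nonneg : 0 ≤ A := by simpa using hA 0
  have hB_nonneg : 0 ≤ B := by simpa using hB 0
  have hpast_le (j : ℕ) : ∑ k ∈ Finset.range j, w (-k) ≤ B * j := by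
    rcases j.eq_zero_or_pos with rfl | hj
    · simp
    · exact (div_le_iff₀ (by positivity)).1 (hB j)
  refine ⟨A + B, fun j n => ?_⟩
  rcases n.eq_zero_or_pos with rfl | hn
  · simp only [Finset.range_zero, Finset.sum_empty, zero_div]
    positivity
  have hn_one : (1 : ℝ) ≤ n := mod_cast hn
  calc (∑ i ∈ Finset.range n, w (i + 1 - j)) / n
      ≤ (∑ i ∈ Finset.range n, w (i + 1)) / n + (∑ k ∈ Finset.range j, w (-k)) / n := by
        rw [← add_div]
        gcongr
        exact sum_range_shift_le hw j n
    _ ≤ A + B * j := by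
        gcongr
        · exact hA n
        · exact (div_le_self (Finset.sum_nonneg fun k _ => hw _) hn_one).trans (hpast_le j)
    _ ≤ (A + B) * (j + 1) := by nlinarith [mul_nonneg hA_nonneg (j.cast_nonneg (α := ℝ))]

theorem summable_abs_pow_mul_succ {r : ℝ} (hr : |r| < 1) :
    Summable fun j : ℕ => |r ^ j| * (j + 1) := by
  simp only [abs_pow, mul_add_one]
  refine .add ?_ (summable_geometric_of_lt_one (abs_nonneg r) hr)
  simpa [mul_comm] using summable_pow_mul_geometric_of_norm_lt_one (R := ℝ) 1 (r := |r|) (by simpa)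

section StrongLaws

variable {Ω : Type*} [MeasurableSpace Ω] {μ : Measure Ω}

theorem integrable_of_integrable_pow [IsFiniteMeasure μ] {X : Ω → ℝ}
    (hX : AEStronglyMeasurable X μ) {n : ℕ} (hn : n ≠ 0)
    (hint : Integrable (fun ω => X ω ^ n) μ) : Integrable X μ := by
  rw [← integrable_norm_iff hX]
  simpa using integrable_norm_pow_of_le hX (Nat.one_le_iff_ne_zero.2 hn)
    (by simpa only [norm_pow] using hint.norm)

theorem ae_tendsto_zero_of_summable_integral_norm {E : Type*} [NormedAddCommGroup E]
    {f : ℕ → Ω → E} (hf : ∀ n, Integrable (f n) μ) (hsum : Summable fun n => ∫ ω, ‖f n ω‖ ∂μ) :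
    ∀ᵐ ω ∂μ, Tendsto (fun n => f n ω) atTop (𝓝 0) := by
  have hnorm : ∑' n, eLpNorm (f n) 1 μ ≠ ⊤ := by
    simp only [eLpNorm_one_eq_lintegral_enorm, ← ofReal_integral_norm_eq_lintegral_enorm (hf _)]
    exact hsum.tsum_ofReal_ne_top
  filter_upwards [summable_norm_of_tsum_eLpNorm_ne_top le_rfl (fun n => (hf n).1) hnorm] with ω hω
  exact tendsto_zero_iff_norm_tendsto_zero.2 hω.tendsto_atTop_zero

theorem ae_exists_shifted_average_abs_le {U : ℤ → Ω → ℝ} (hint : Integrable (U 0) μ)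
    (hindep : Pairwise fun i j => U i ⟂ᵢ[μ] U j) (hident : ∀ i, IdentDistrib (U i) (U 0) μ μ) :
    ∀ᵐ ω ∂μ, ∃ C, ∀ j n : ℕ, (∑ i ∈ Finset.range n, |U (i + 1 - j) ω|) / n ≤ C * (j + 1) := by
  have hlaw {e : ℕ → ℤ} (he : Function.Injective e) : ∀ᵐ ω ∂μ, Tendsto
      (fun n : ℕ => (∑ i ∈ Finset.range n, |U (e i) ω|) / n) atTop
      (𝓝 (∫ ω, |U (e 0) ω| ∂μ)) :=
    strong_law_ae_real (fun i ω => |U (e i) ω|) ((hident _).integrable_iff.2 hint).abs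
      (fun i j hij => (hindep (he.ne hij)).comp measurable_abs measurable_abs)
      (fun i => ((hident _).trans (hident _).symm).comp measurable_abs)
  have hfuture_inj : Function.Injective fun i : ℕ => (i + 1 : ℤ) := fun i j h => by simpa using h
  have hpast_inj : Function.Injective fun i : ℕ => (-i : ℤ) := fun i j h => by simpa using h
  filter_upwards [hlaw hfuture_inj, hlaw hpast_inj] with ω hfuture hpast
  exact exists_shifted_average_le (w := fun i => |U i ω|) (fun i => abs_nonneg _) hfuture hpast

variable [IsProbabilityMeasure μ]

theorem integral_sum_sq_le_of_bounded {ι : Type*} {X : ι → Ω → ℝ} {C : ℝ}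
    (hX : ∀ i, AEMeasurable (X i) μ) (hbdd : ∀ i, ∀ᵐ ω ∂μ, |X i ω| ≤ C)
    (hindep : Pairwise fun i j => X i ⟂ᵢ[μ] X j) (hmean : ∀ i, ∫ ω, X i ω ∂μ = 0)
    (s : Finset ι) : ∫ ω, (∑ i ∈ s, X i ω) ^ 2 ∂μ ≤ s.card * C ^ 2 := by
  have hmemLp (i : ι) : MemLp (X i) 2 μ := .of_bound (hX i).aestronglyMeasurable C (hbdd i)
  have hsum_mean : ∫ ω, (∑ i ∈ s, X i) ω ∂μ = 0 := by
    simp only [Finset.sum_apply]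
    rw [integral_finsetSum s fun i _ => (hmemLp i).integrable one_le_two]
    exact Finset.sum_eq_zero fun i _ => hmean i
  have hvar (i : ι) : variance (X i) μ ≤ C ^ 2 := by
    have := variance_le_sq_of_bounded ((hbdd i).mono fun ω => abs_le.1) (hX i)
    rwa [sub_neg_eq_add, add_self_div_two] at this
  calc ∫ ω, (∑ i ∈ s, X i ω) ^ 2 ∂μ
      = variance (∑ i ∈ s, X i) μ := by
        rw [variance_of_integral_eq_zero (by fun_prop) hsum_mean]
        simp only [Finset.sum_apply]
    _ = ∑ i ∈ s, variance (X i) μ :=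
        IndepFun.variance_sum (fun i _ => hmemLp i) (hindep.set_pairwise _)
    _ ≤ s.card * C ^ 2 := by
        simpa only [nsmul_eq_mul] using Finset.sum_le_card_nsmul s _ _ fun i _ => hvar i

theorem integral_average_sq_le_of_bounded {X : ℕ → Ω → ℝ} {C : ℝ}
    (hX : ∀ i, AEMeasurable (X i) μ) (hbdd : ∀ i, ∀ᵐ ω ∂μ, |X i ω| ≤ C)
    (hindep : Pairwise fun i j => X i ⟂ᵢ[μ] X j) (hmean : ∀ i, ∫ ω, X i ω ∂μ = 0) (n : ℕ) :
    ∫ ω, ((∑ i ∈ Finset.range n, X i ω) / n) ^ 2 ∂μ ≤ C ^ 2 / n := by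
  simp only [div_pow, integral_div]
  calc (∫ ω, (∑ i ∈ Finset.range n, X i ω) ^ 2 ∂μ) / (n : ℝ) ^ 2
      ≤ n * C ^ 2 / (n : ℝ) ^ 2 := by
        gcongr
        simpa only [Finset.card_range] using
          integral_sum_sq_le_of_bounded hX hbdd hindep hmean (Finset.range n)
    _ = C ^ 2 / n := by
        rcases eq_or_ne n 0 with rfl | hn
        · simp
        · field_simp

theorem strong_law_ae_of_bounded {X : ℕ → Ω → ℝ} {C : ℝ}
    (hX : ∀ i, AEMeasurable (X i) μ) (hbdd : ∀ i, ∀ᵐ ω ∂μ, |X i ω| ≤ C)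
    (hindep : Pairwise fun i j => X i ⟂ᵢ[μ] X j) (hmean : ∀ i, ∫ ω, X i ω ∂μ = 0) :
    ∀ᵐ ω ∂μ, Tendsto (fun n : ℕ => (∑ i ∈ Finset.range n, X i ω) / n) atTop (𝓝 0) := by
  have hsq_int (n : ℕ) : Integrable (fun ω => ((∑ i ∈ Finset.range n, X i ω) / n) ^ 2) μ := by
    have hsum : MemLp (fun ω => ∑ i ∈ Finset.range n, X i ω) 2 μ := memLp_finsetSum _ fun i _ =>
      .of_bound (hX i).aestronglyMeasurable C (hbdd i)
    simpa only [div_pow] using hsum.integrable_sq.div_const _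
  have hsummable : Summable fun n : ℕ =>
      ∫ ω, ‖((∑ i ∈ Finset.range (n ^ 2), X i ω) / (n ^ 2 : ℕ)) ^ 2‖ ∂μ := by
    refine .of_nonneg_of_le (fun n => integral_nonneg fun ω => norm_nonneg _) (fun n => ?_)
      ((Real.summable_nat_pow_inv.2 one_lt_two).mul_left (C ^ 2))
    simp only [norm_pow, Real.norm_eq_abs, sq_abs, ← Nat.cast_pow, ← div_eq_mul_inv]
    exact integral_average_sq_le_of_bounded hX hbdd hindep hmean (n ^ 2)
  filter_upwards [ae_tendsto_zero_of_summable_integral_norm (fun n => hsq_int (n ^ 2)) hsummable,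
    ae_all_iff.2 hbdd] with ω hω_sq hω_bdd
  refine tendsto_average_of_tendsto_average_sq hω_bdd ?_
  rw [tendsto_zero_iff_abs_tendsto_zero]
  simpa only [Function.comp_def, Real.sqrt_sq_eq_abs, Real.sqrt_zero] using hω_sq.sqrt

theorem exists_boundedContinuous_centered_approx {X : Ω → ℝ} (hX : Integrable X μ)
    (hmean : ∫ ω, X ω ∂μ = 0) {δ : ℝ} (hδ : 0 < δ) :
    ∃ g : BoundedContinuousFunction ℝ ℝ,
      ∫ ω, g (X ω) ∂μ = 0 ∧ ∫ ω, |X ω - g (X ω)| ∂μ < δ := by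
  have hX_meas : AEMeasurable X μ := hX.aemeasurable
  have : IsProbabilityMeasure (μ.map X) := Measure.isProbabilityMeasure_map hX_meas
  have hid : Integrable id (μ.map X) :=
    (integrable_map_measure aestronglyMeasurable_id hX_meas).2 hX
  obtain ⟨f, hf, -⟩ := hid.exists_boundedContinuous_integral_sub_le (show 0 < δ / 3 by positivity)
  rw [integral_map hX_meas (by fun_prop)] at hf
  have hf_int : Integrable (fun ω => f (X ω)) μ :=
    (f.integrable (μ.map X)).comp_aemeasurable hX_meas
  set c := ∫ ω, f (X ω) ∂μ with hc
  have hc_le : |c| ≤ δ / 3 := by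
    calc |c| = |∫ ω, (X ω - f (X ω)) ∂μ| := by
          rw [integral_sub hX hf_int, hmean, zero_sub, abs_neg]
      _ ≤ ∫ ω, |X ω - f (X ω)| ∂μ := abs_integral_le_integral_abs
      _ ≤ δ / 3 := hf
  have herr_int : Integrable (fun ω => |X ω - f (X ω)|) μ := (hX.sub hf_int).abs
  have hg_int : Integrable (fun ω => f (X ω) - c) μ := hf_int.sub (integrable_const c)
  refine ⟨f - .const ℝ c, ?_, ?_⟩
  · simp [integral_sub hf_int (integrable_const c), ← hc]
  · calc ∫ ω, |X ω - (f (X ω) - c)| ∂μ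
        ≤ ∫ ω, (|X ω - f (X ω)| + |c|) ∂μ := by
          refine integral_mono (hX.sub hg_int).abs (herr_int.add (integrable_const _)) fun ω => ?_
          simpa only [← sub_add] using abs_add_le (X ω - f (X ω)) c
      _ = ∫ ω, |X ω - f (X ω)| ∂μ + |c| := by
          rw [integral_add herr_int (integrable_const _), integral_const, probReal_univ, one_smul]
      _ ≤ δ / 3 + δ / 3 := add_le_add hf hc_le
      _ < δ := by linarith

theorem strong_law_ae_weighted {X : ℕ → Ω → ℝ} (hint : Integrable (X 0) μ)
    (hindep : Pairwise fun i j => X i ⟂ᵢ[μ] X j) (hident : ∀ i, IdentDistrib (X i) (X 0) μ μ)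
    (hmean : ∫ ω, X 0 ω ∂μ = 0) {v : ℕ → ℝ} {M : ℝ} (hv : ∀ i, |v i| ≤ M) :
    ∀ᵐ ω ∂μ, Tendsto (fun n : ℕ => (∑ i ∈ Finset.range n, v i * X i ω) / n) atTop (𝓝 0) := by
  choose g hg_mean hg_approx using fun k : ℕ =>
    exists_boundedContinuous_centered_approx hint hmean (Nat.one_div_pos_of_nat (α := ℝ) (n := k))
  have hmain (k : ℕ) : ∀ᵐ ω ∂μ, Tendsto
      (fun n : ℕ => (∑ i ∈ Finset.range n, v i * g k (X i ω)) / n) atTop (𝓝 0) := by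
    have hg_meas : Measurable (g k) := (g k).continuous.measurable
    refine strong_law_ae_of_bounded (C := M * ‖g k‖)
      (fun i => (hg_meas.comp_aemeasurable (hident i).aemeasurable_fst).const_mul (v i))
      (fun i => ae_of_all _ fun ω => ?_) (fun i j hij => ?_) (fun i => ?_)
    · rw [abs_mul]
      exact mul_le_mul (hv i) ((g k).norm_coe_le_norm _) (abs_nonneg _)
        ((abs_nonneg _).trans (hv i))
    · exact (hindep hij).comp (hg_meas.const_mul (v i)) (hg_meas.const_mul (v j))
    · have : ∫ ω, g k (X i ω) ∂μ = 0 := ((hident i).comp hg_meas).integral_eq.trans (hg_mean k)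
      rw [integral_const_mul, this, mul_zero]
  have herror (k : ℕ) : ∀ᵐ ω ∂μ, Tendsto
      (fun n : ℕ => (∑ i ∈ Finset.range n, |X i ω - g k (X i ω)|) / n) atTop
      (𝓝 (∫ ω, |X 0 ω - g k (X 0 ω)| ∂μ)) := by
    have hr_meas : Measurable fun x => |x - g k x| := by fun_prop
    have hg_int : Integrable (fun ω => g k (X 0 ω)) μ :=
      ((g k).integrable _).comp_aemeasurable hint.aemeasurable
    exact strong_law_ae_real (fun i ω => |X i ω - g k (X i ω)|) (hint.sub hg_int).abs
      (fun i j hij => (hindep hij).comp hr_meas hr_meas) (fun i => (hident i).comp hr_meas)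
  filter_upwards [ae_all_iff.2 hmain, ae_all_iff.2 herror] with ω hω_main hω_error
  refine tendsto_weighted_average_of_approx hv fun δ hδ => ?_
  obtain ⟨k, hk⟩ := exists_nat_one_div_lt hδ
  exact ⟨fun i => g k (X i ω), _, (hg_approx k).trans hk, hω_main k, hω_error k⟩

end StrongLaws

theorem stmt3_general {Ω : Type*} [MeasurableSpace Ω] {μ : Measure Ω} [IsProbabilityMeasure μ]
    {U : ℤ → Ω → ℝ} (hint : Integrable (U 0) μ) (hindep : Pairwise fun i j => U i ⟂ᵢ[μ] U j)
    (hident : ∀ i, IdentDistrib (U i) (U 0) μ μ) (hmean : ∫ ω, U 0 ω ∂μ = 0)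
    {a : ℕ → ℝ} (ha : Summable fun j : ℕ => |a j| * (j + 1))
    {ε : ℤ → Ω → ℝ}
    (hε : ∀ᵐ ω ∂μ, ∀ i : ℤ, HasSum (fun j : ℕ => a j * U (i - (j : ℤ)) ω) (ε i ω))
    {M : ℝ} {v : ℕ → ℝ} (hv : ∀ i, |v i| ≤ M) :
    ∀ᵐ ω ∂μ, Tendsto (fun n : ℕ =>
      (1 / (n : ℝ)) * ∑ i ∈ Finset.Icc 1 n, v i * ε (i : ℤ) ω)
      atTop (𝓝 0) := by
  have hlaw (j : ℕ) : ∀ᵐ ω ∂μ, Tendsto (fun n : ℕ =>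
      (∑ i ∈ Finset.range n, v (i + 1) * U (i + 1 - j) ω) / n) atTop (𝓝 0) :=
    strong_law_ae_weighted (X := fun i => U (i + 1 - j)) ((hident _).integrable_iff.2 hint)
      (fun i k hik => hindep (by simpa using hik)) (fun i => (hident _).trans (hident _).symm)
      ((hident _).integral_eq.trans hmean) fun i => hv (i + 1)
  filter_upwards [ae_all_iff.2 hlaw, ae_exists_shifted_average_abs_le hint hindep hident, hε]
    with ω hω_law ⟨C, hC⟩ hω_series
  have hbound (j n : ℕ) :
      |(∑ i ∈ Finset.range n, v (i + 1) * U (i + 1 - j) ω) / n| ≤ M * (C * (j + 1)) :=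
    (abs_sum_mul_div_le (fun i _ => hv (i + 1)) n.cast_nonneg).trans
      (mul_le_mul_of_nonneg_left (hC j n) ((abs_nonneg _).trans (hv 0)))
  have hsummable : Summable fun j : ℕ => |a j| * (M * (C * (j + 1))) :=
    (ha.mul_left (M * C)).congr fun j => by ring
  have hlim := tendsto_average_of_hasSum (y := fun i => v (i + 1) * ε (i + 1) ω) hsummable
    (fun i => by
      simpa only [mul_left_comm] using (hω_series (i + 1)).mul_left (v (i + 1)))
    hbound hω_law
  refine hlim.congr fun n => ?_
  rw [← Finset.Ico_add_one_right_eq_Icc, Finset.sum_Ico_eq_sum_range, one_div_mul_eq_div]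
  simp [add_comm 1]

/-- For a uniformly bounded real sequence `v` and the stationary causal
AR(1) noise `ε`, `(1/n) ∑_{i=1}^n v_i ε_i` converges to `0` almost surely. -/
theorem stmt3
    {Ω : Type*} [MeasurableSpace Ω] (μ : Measure Ω) [IsProbabilityMeasure μ]
    (U : ℤ → Ω → ℝ) (hUmeas : ∀ j, Measurable (U j))
    (hUindep : iIndepFun U μ)
    (hUident : ∀ j, μ.map (U j) = μ.map (U 0))
    (σ : ℝ) (hσ : 0 < σ)
    (hUmean : ∫ ω, U 0 ω ∂μ = 0)
    (hUvar : ∫ ω, (U 0 ω) ^ 2 ∂μ = σ ^ 2)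
    (hU8 : Integrable (fun ω => (U 0 ω) ^ 8) μ)
    (φ : ℝ) (hφ0 : φ ≠ 0) (hφ1 : |φ| < 1)
    (ε : ℤ → Ω → ℝ) (hεmeas : ∀ i, Measurable (ε i))
    (hεsum : ∀ᵐ ω ∂μ, ∀ i : ℤ, HasSum (fun j : ℕ => φ ^ j * U (i - (j : ℤ)) ω) (ε i ω))
    (M₀ : ℝ) (v : ℕ → ℝ) (hv : ∀ i, |v i| ≤ M₀) :
    ∀ᵐ ω ∂μ, Tendsto (fun n : ℕ =>
      (1 / (n : ℝ)) * ∑ i ∈ Finset.Icc 1 n, v i * ε (i : ℤ) ω)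
      atTop (𝓝 0) :=
  stmt3_general (integrable_of_integrable_pow (hUmeas 0).aestronglyMeasurable (by decide) hU8)
    (fun i j hij => hUindep.indepFun hij)
    (fun j => ⟨(hUmeas j).aemeasurable, (hUmeas 0).aemeasurable, hUident j⟩)
    hUmean (summable_abs_pow_mul_succ hφ1) hεsum hv
end

section
/- (Theorem 1) Almost surely, sup over (γ,g)∈Γ×𝒢 of |Q_n(γ,g) − Q(γ,g) − σ²/(1−φ²)| converges to 0 as n→∞; that is, the average squared error loss Q_n converges uniformly on Γ×𝒢 to Q + σ²/(1−φ²) with probability 1. -/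
open MeasureTheory ProbabilityTheory Filter Set Topology

/-- The class 𝒢 of nonincreasing, `[m,M]`-valued, `L`-Lipschitz continuous functions
on `[0,A]`. -/
def inG (A m M L : ℝ) (g : ℝ → ℝ) : Prop :=
  ContinuousOn g (Set.Icc 0 A) ∧ AntitoneOn g (Set.Icc 0 A) ∧
  (∀ t ∈ Set.Icc (0 : ℝ) A, g t ∈ Set.Icc m M) ∧
  LipschitzOnWith (Real.toNNReal L) g (Set.Icc 0 A)

/-- The limiting criterion `Q(γ, g)`. -/
noncomputable def Qlim (Δ γ₀ : ℝ) (x z g₀ : ℝ → ℝ) (γ : ℝ) (g : ℝ → ℝ) : ℝ :=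
  (1 / Δ) * ∫ w in (0 : ℝ)..Δ,
    (Real.log (1 + γ₀ * x w) - Real.log (1 + γ * x w) +
      Real.log (g₀ (z w)) - Real.log (g (z w))) ^ 2

/-- The empirical average squared error loss `Q_n(γ, g)(ω)`, where the observations are
`yᵢ = log(1+γ₀xᵢ) + log g₀(zᵢ) + εᵢ` with `xᵢ = x(iΔ/n)`, `zᵢ = z(iΔ/n)`. -/
noncomputable def Qemp {Ω : Type*} (Δ γ₀ : ℝ) (x z g₀ : ℝ → ℝ) (ε : ℤ → Ω → ℝ)
    (n : ℕ) (γ : ℝ) (g : ℝ → ℝ) (ω : Ω) : ℝ :=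
  (1 / (n : ℝ)) * ∑ i ∈ Finset.Icc 1 n,
    ((Real.log (1 + γ₀ * x ((i : ℝ) * Δ / n)) + Real.log (g₀ (z ((i : ℝ) * Δ / n))) +
        ε (i : ℤ) ω)
      - Real.log (1 + γ * x ((i : ℝ) * Δ / n)) - Real.log (g (z ((i : ℝ) * Δ / n)))) ^ 2

/-!
With `h` the difference of the log-means under `(γ₀, g₀)` and `(γ, g)`, the residuals of the
criterion are `h(iΔ/n) + εᵢ`, so expanding the square splits `Q_n` into a Riemann sum of `h²`, a
mean of `h` weighted by the noise, and the mean of `εᵢ²`. The functions `h` are uniformly bounded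
and uniformly equicontinuous, so on a fixed partition of `[0, Δ]` all of them are almost constant on
each block; uniform convergence of the first two terms then only requires that the means of the
weights over finitely many blocks converge, that is, that the noise has Cesàro mean zero.

For the noise, summing `ε_{i+1} = φ εᵢ + U_{i+1}` and its square over `i < n` expresses the means of
`εᵢ` and `εᵢ²` through those of `Uᵢ`, `Uᵢ²` and `εᵢ U_{i+1}`. The first two obey the strong law of
large numbers. The summands of the third are orthogonal in `L²`, because `U_{i+1}` is independent of
the past, and a strong law for orthogonal variables applies.
-/

/-! ### Uniform equicontinuity -/

section UniformEquicontinuity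

variable {ι α β γ : Type*} [UniformSpace α] [UniformSpace β] [UniformSpace γ]

open scoped Uniformity

lemma uniformEquicontinuousOn_const {f : α → β} {s : Set α} (hf : UniformContinuousOn f s) :
    UniformEquicontinuousOn (fun _ : ι ↦ f) s := by
  intro V hV
  filter_upwards [hf hV] with p hp _ using hp

lemma uniformEquicontinuousOn_comp_left {F : ι → α → β} {s : Set α} {t : Set β} {φ : β → γ}
    (hφ : UniformContinuousOn φ t) (hF : UniformEquicontinuousOn F s)
    (hmaps : ∀ i, MapsTo (F i) s t) :
    UniformEquicontinuousOn (fun i a ↦ φ (F i a)) s := by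
  intro V hV
  filter_upwards [hF _ (mem_inf_principal.1 (hφ hV)), mem_inf_of_right (mem_principal_self _)]
    with p hp hps i using hp i ⟨hmaps i hps.1, hmaps i hps.2⟩

lemma uniformEquicontinuousOn_comp_right {F : ι → β → γ} {s : Set α} {t : Set β} {u : α → β}
    (hF : UniformEquicontinuousOn F t) (hu : UniformContinuousOn u s) (hmaps : MapsTo u s t) :
    UniformEquicontinuousOn (fun i a ↦ F i (u a)) s := fun V hV ↦
  (tendsto_inf.2 ⟨hu, tendsto_inf_right
    (tendsto_principal_principal.2 (hmaps.prodMap hmaps))⟩).eventually (hF V hV)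

lemma uniformEquicontinuousOn_prodMk {F : ι → α → β} {G : ι → α → γ} {s : Set α}
    (hF : UniformEquicontinuousOn F s) (hG : UniformEquicontinuousOn G s) :
    UniformEquicontinuousOn (fun i a ↦ (F i a, G i a)) s := by
  intro V hV
  obtain ⟨V₁, hV₁, V₂, hV₂, hV₁₂⟩ := entourageProd_subset hV
  filter_upwards [hF V₁ hV₁, hG V₂ hV₂] with p hp₁ hp₂ i using hV₁₂ ⟨hp₁ i, hp₂ i⟩

end UniformEquicontinuity

/-! ### Weighted Riemann sums -/

/-- The Riemann sum of `f` over `[0, 1]` with nodes `(i + 1) / n`, the node `(i + 1) / n` carrying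
the mass `w i / n`. The choice `w = 1` is the usual Riemann sum, and taking for `w` the noise gives
the cross term of the expanded criterion. -/
noncomputable def weightedRiemannSum (w : ℕ → ℝ) (f : ℝ → ℝ) (n : ℕ) : ℝ :=
  (∑ i ∈ Finset.range n, w i * f ((i + 1) / n)) / n

lemma tendsto_sum_range_floor_div {w : ℕ → ℝ} {c : ℝ}
    (hw : Tendsto (fun n : ℕ ↦ (∑ i ∈ Finset.range n, w i) / n) atTop (𝓝 c)) {t : ℝ} (ht : 0 ≤ t) :
    Tendsto (fun n : ℕ ↦ (∑ i ∈ Finset.range ⌊t * n⌋₊, w i) / n) atTop (𝓝 (t * c)) := by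
  obtain rfl | ht := ht.eq_or_lt
  · simp
  have hfloor : Tendsto (fun n : ℕ ↦ (⌊t * n⌋₊ : ℝ) / n) atTop (𝓝 t) :=
    (tendsto_nat_floor_mul_div_atTop ht.le).comp tendsto_natCast_atTop_atTop
  have hatTop : Tendsto (fun n : ℕ ↦ ⌊t * n⌋₊) atTop atTop := tendsto_nat_floor_mul_atTop t ht
  refine (hfloor.mul (hw.comp hatTop)).congr' ?_
  filter_upwards [hatTop.eventually_ne_atTop 0] with n hn
  have : (⌊t * n⌋₊ : ℝ) ≠ 0 := mod_cast hn
  simp only [Function.comp_apply]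
  field_simp

lemma sum_range_sum_Ico {τ : ℕ → ℕ} (hτ : Monotone τ) (a : ℕ → ℝ) (K : ℕ) :
    ∑ k ∈ Finset.range K, ∑ i ∈ Finset.Ico (τ k) (τ (k + 1)), a i
      = ∑ i ∈ Finset.Ico (τ 0) (τ K), a i := by
  induction K with
  | zero => simp
  | succ K ih =>
    rw [Finset.sum_range_succ, ih,
      Finset.sum_Ico_consecutive _ (hτ K.zero_le) (hτ K.le_succ)]

/-- The number of nodes `(i + 1) / n`, `i < n`, lying in the first `k` of `K` blocks of equal length
partitioning `[0, 1]`: the nodes with `blockEnd K n k ≤ i < blockEnd K n (k + 1)` are those of the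
`k`-th block. -/
noncomputable def blockEnd (K n k : ℕ) : ℕ := ⌊(k : ℝ) / K * n⌋₊

/-- The total mass which the weights `w` of a `weightedRiemannSum` put on the `k`-th block. -/
noncomputable def blockWeight (w : ℕ → ℝ) (K n k : ℕ) : ℝ :=
  (∑ i ∈ Finset.Ico (blockEnd K n k) (blockEnd K n (k + 1)), w i) / n

lemma monotone_blockEnd (K n : ℕ) : Monotone (blockEnd K n) := fun k l hkl ↦ by
  unfold blockEnd; gcongr

lemma sum_range_eq_sum_blocks {K : ℕ} (hK : K ≠ 0) (a : ℕ → ℝ) (n : ℕ) :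
    ∑ i ∈ Finset.range n, a i =
      ∑ k ∈ Finset.range K, ∑ i ∈ Finset.Ico (blockEnd K n k) (blockEnd K n (k + 1)), a i := by
  have hK' : (K : ℝ) ≠ 0 := mod_cast hK
  rw [sum_range_sum_Ico (monotone_blockEnd K n), Finset.range_eq_Ico]
  simp [blockEnd, hK']

lemma tendsto_blockWeight {w : ℕ → ℝ} {c : ℝ}
    (hw : Tendsto (fun n : ℕ ↦ (∑ i ∈ Finset.range n, w i) / n) atTop (𝓝 c)) (K k : ℕ) :
    Tendsto (fun n ↦ blockWeight w K n k) atTop (𝓝 (c / K)) := by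
  have hpartial (j : ℕ) :
      Tendsto (fun n ↦ (∑ i ∈ Finset.range (blockEnd K n j), w i) / n) atTop (𝓝 (j / K * c)) :=
    tendsto_sum_range_floor_div hw (by positivity)
  have hlim : c / K = (k + 1 : ℕ) / K * c - k / K * c := by push_cast; ring
  rw [hlim]
  refine ((hpartial (k + 1)).sub (hpartial k)).congr fun n ↦ ?_
  rw [blockWeight, Finset.sum_Ico_eq_sub _ (monotone_blockEnd K n k.le_succ), sub_div]

lemma node_mem_Icc_of_mem_block {K n k i : ℕ}
    (hi : i ∈ Finset.Ico (blockEnd K n k) (blockEnd K n (k + 1))) :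
    ((i + 1) / n : ℝ) ∈ Icc (k / K : ℝ) ((k + 1) / K) := by
  obtain ⟨hlow, hupp⟩ := Finset.mem_Ico.1 hi
  have hn : (0 : ℝ) < n := by
    rcases n.eq_zero_or_pos with rfl | hn
    · simp [blockEnd] at hupp
    · exact mod_cast hn
  constructor
  · rw [le_div_iff₀ hn]
    have hfloor : (k / K * n : ℝ) < blockEnd K n k + 1 := Nat.lt_floor_add_one _
    have : (blockEnd K n k : ℝ) ≤ i := mod_cast hlow
    linarith
  · rw [div_le_iff₀ hn]
    have hfloor : (blockEnd K n (k + 1) : ℝ) ≤ (k + 1 : ℕ) / K * n := Nat.floor_le (by positivity)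
    have : (i + 1 : ℝ) ≤ blockEnd K n (k + 1) := mod_cast hupp
    push_cast at hfloor
    linarith

lemma abs_sum_Ico_sub_integral_le {w : ℕ → ℝ} {f : ℝ → ℝ} {a b n : ℕ} {s t v c η : ℝ}
    (hst : s ≤ t) (hf : ContinuousOn f (Icc s t)) (hosc : ∀ r ∈ Icc s t, |f r - v| ≤ η)
    (hnode : ∀ i ∈ Finset.Ico a b, ((i + 1) / n : ℝ) ∈ Icc s t) :
    |(∑ i ∈ Finset.Ico a b, w i * f ((i + 1) / n)) / n - c * ∫ r in s..t, f r| ≤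
      η * ((∑ i ∈ Finset.Ico a b, |w i|) / n) +
        |v| * |(∑ i ∈ Finset.Ico a b, w i) / n - c * (t - s)| + |c| * (η * (t - s)) := by
  have hint : IntervalIntegrable f volume s t := (uIcc_of_le hst ▸ hf).intervalIntegrable
  have hdecomp : (∑ i ∈ Finset.Ico a b, w i * f ((i + 1) / n)) / n - c * ∫ r in s..t, f r =
      (∑ i ∈ Finset.Ico a b, w i * (f ((i + 1) / n) - v)) / n
        + v * ((∑ i ∈ Finset.Ico a b, w i) / n - c * (t - s)) - c * ∫ r in s..t, (f r - v) := by
    rw [intervalIntegral.integral_sub hint intervalIntegrable_const,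
      intervalIntegral.integral_const, smul_eq_mul]
    simp only [mul_sub, Finset.sum_sub_distrib, ← Finset.sum_mul]
    ring
  have hsum : |(∑ i ∈ Finset.Ico a b, w i * (f ((i + 1) / n) - v)) / n| ≤
      η * ((∑ i ∈ Finset.Ico a b, |w i|) / n) := by
    rw [abs_div, Nat.abs_cast, ← mul_div_assoc, Finset.mul_sum]
    gcongr
    refine (Finset.abs_sum_le_sum_abs _ _).trans (Finset.sum_le_sum fun i hi ↦ ?_)
    rw [abs_mul, mul_comm]
    gcongr
    exact hosc _ (hnode i hi)
  have hintegral : |∫ r in s..t, (f r - v)| ≤ η * (t - s) := by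
    rw [← abs_of_nonneg (sub_nonneg.2 hst)]
    exact intervalIntegral.norm_integral_le_of_norm_le_const (f := fun r ↦ f r - v) fun r hr ↦
      hosc r (Ioc_subset_Icc_self (uIoc_of_le hst ▸ hr))
  rw [hdecomp]
  refine (abs_sub _ _).trans (add_le_add ((abs_add_le _ _).trans (add_le_add hsum ?_)) ?_)
  · rw [abs_mul]
  · rw [abs_mul]; gcongr

lemma integral_eq_sum_integral_div {f : ℝ → ℝ} {K : ℕ} (hK : K ≠ 0)
    (hf : IntervalIntegrable f volume 0 1) :
    ∫ t in (0 : ℝ)..1, f t =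
      ∑ k ∈ Finset.range K, ∫ t in (k / K : ℝ)..((k + 1) / K), f t := by
  have hK' : (0 : ℝ) < K := mod_cast Nat.pos_of_ne_zero hK
  have hmem {k : ℕ} (hk : k ≤ K) : (k / K : ℝ) ∈ uIcc (0 : ℝ) 1 := by
    rw [uIcc_of_le zero_le_one]
    exact ⟨by positivity, (div_le_one hK').2 (mod_cast hk)⟩
  have := intervalIntegral.sum_integral_adjacent_intervals (μ := volume) (f := f)
    (a := fun k : ℕ ↦ (k / K : ℝ)) (n := K) fun k hk ↦
      hf.mono_set (uIcc_subset_uIcc (hmem hk.le) (hmem hk))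
  simpa [hK'.ne'] using this.symm

lemma abs_weightedRiemannSum_sub_integral_le {w : ℕ → ℝ} {f : ℝ → ℝ} {K n : ℕ} {B c η : ℝ}
    (hK : K ≠ 0) (hf : ContinuousOn f (Icc 0 1)) (hB : ∀ t ∈ Icc (0 : ℝ) 1, |f t| ≤ B)
    (hosc : ∀ s ∈ Icc (0 : ℝ) 1, ∀ t ∈ Icc (0 : ℝ) 1, |s - t| ≤ 1 / K → |f s - f t| ≤ η) :
    |weightedRiemannSum w f n - c * ∫ t in (0 : ℝ)..1, f t| ≤
      η * ((∑ i ∈ Finset.range n, |w i|) / n + |c|) +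
        B * ∑ k ∈ Finset.range K, |blockWeight w K n k - c / K| := by
  have hK' : (0 : ℝ) < K := mod_cast Nat.pos_of_ne_zero hK
  have hblock {k : ℕ} (hk : k < K) : Icc (k / K : ℝ) ((k + 1) / K) ⊆ Icc 0 1 :=
    Icc_subset_Icc (by positivity) ((div_le_one hK').2 (mod_cast hk))
  have hle (k : ℕ) : (k / K : ℝ) ≤ (k + 1) / K := by gcongr; linarith
  have hlen (k : ℕ) : ((k + 1) / K - k / K : ℝ) = 1 / K := by ring
  have hterm : ∀ k ∈ Finset.range K,
      |(∑ i ∈ Finset.Ico (blockEnd K n k) (blockEnd K n (k + 1)), w i * f ((i + 1) / n)) / n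
          - c * ∫ t in (k / K : ℝ)..((k + 1) / K), f t| ≤
        η * blockWeight (fun i ↦ |w i|) K n k + B * |blockWeight w K n k - c / K| +
          |c| * (η * (1 / K)) := by
    intro k hk
    have hsub := hblock (Finset.mem_range.1 hk)
    have hleft : (k / K : ℝ) ∈ Icc (k / K : ℝ) ((k + 1) / K) := left_mem_Icc.2 (hle k)
    refine (abs_sum_Ico_sub_integral_le (v := f (k / K)) (η := η) (hle k) (hf.mono hsub)
      (fun r hr ↦ hosc _ (hsub hr) _ (hsub hleft) ?_) fun i ↦ node_mem_Icc_of_mem_block).trans ?_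
    · rw [abs_of_nonneg (sub_nonneg.2 hr.1), ← hlen k]
      exact sub_le_sub_right hr.2 _
    · rw [hlen, mul_one_div, ← blockWeight, ← blockWeight]
      gcongr
      exact hB _ (hsub hleft)
  rw [weightedRiemannSum, sum_range_eq_sum_blocks hK,
    integral_eq_sum_integral_div hK (hf.intervalIntegrable_of_Icc zero_le_one), Finset.sum_div,
    Finset.mul_sum, ← Finset.sum_sub_distrib]
  refine ((Finset.abs_sum_le_sum_abs _ _).trans (Finset.sum_le_sum hterm)).trans_eq ?_
  rw [sum_range_eq_sum_blocks hK (fun i ↦ |w i|), Finset.sum_div]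
  simp only [Finset.sum_add_distrib, ← Finset.mul_sum, Finset.sum_const, blockWeight,
    Finset.card_range, nsmul_eq_mul]
  rw [show |c| * (η * (K * (1 / K : ℝ))) = η * |c| by field_simp]
  ring

lemma exists_nat_forall_abs_sub_le_of_uniformEquicontinuousOn {ι : Type*} {F : ι → ℝ → ℝ}
    {S : Set ℝ} {η : ℝ} (hF : UniformEquicontinuousOn F S) (hη : 0 < η) :
    ∃ K : ℕ, K ≠ 0 ∧ ∀ i, ∀ s ∈ S, ∀ t ∈ S, |s - t| ≤ 1 / K → |F i s - F i t| ≤ η := by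
  obtain ⟨δ, hδ, hFδ⟩ := ((Metric.uniformity_basis_dist.inf_principal _).uniformEquicontinuousOn_iff
    Metric.uniformity_basis_dist_le).1 hF η hη
  obtain ⟨K, hKδ⟩ := exists_nat_one_div_lt hδ
  refine ⟨K + 1, K.succ_ne_zero, fun i s hs t ht hst ↦ hFδ s t ⟨?_, hs, ht⟩ i⟩
  exact (hst.trans_eq (by push_cast; rfl)).trans_lt hKδ

theorem tendstoUniformly_weightedRiemannSum {ι : Type*} {F : ι → ℝ → ℝ} {w : ℕ → ℝ} {B W c : ℝ}
    (hF : UniformEquicontinuousOn F (Icc 0 1)) (hB : ∀ i, ∀ t ∈ Icc (0 : ℝ) 1, |F i t| ≤ B)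
    (hw : Tendsto (fun n : ℕ ↦ (∑ i ∈ Finset.range n, w i) / n) atTop (𝓝 c))
    (hW : ∀ n : ℕ, (∑ i ∈ Finset.range n, |w i|) / n ≤ W) :
    TendstoUniformly (fun n i ↦ weightedRiemannSum w (F i) n)
      (fun i ↦ c * ∫ t in (0 : ℝ)..1, F i t) atTop := by
  rw [Metric.tendstoUniformly_iff]
  intro e he
  obtain ⟨η, hη, hηe⟩ := exists_pos_mul_lt (half_pos he) (W + |c|)
  obtain ⟨K, hK, hosc⟩ := exists_nat_forall_abs_sub_le_of_uniformEquicontinuousOn hF hη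
  have hweights : Tendsto (fun n ↦ B * ∑ k ∈ Finset.range K, |blockWeight w K n k - c / K|)
      atTop (𝓝 0) := by
    simpa using (tendsto_finsetSum (Finset.range K) fun k _ ↦
      ((tendsto_blockWeight hw K k).sub_const (c / K)).abs).const_mul B
  filter_upwards [hweights.eventually_lt_const (half_pos he)] with n hn i
  rw [dist_comm, Real.dist_eq]
  calc |weightedRiemannSum w (F i) n - c * ∫ t in (0 : ℝ)..1, F i t|
      ≤ η * ((∑ i ∈ Finset.range n, |w i|) / n + |c|) +
          B * ∑ k ∈ Finset.range K, |blockWeight w K n k - c / K| :=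
        abs_weightedRiemannSum_sub_integral_le hK
          (hF.uniformContinuousOn i).continuousOn (hB i) (hosc i)
    _ ≤ η * (W + |c|) + B * ∑ k ∈ Finset.range K, |blockWeight w K n k - c / K| := by
        gcongr; exact hW n
    _ < e := by linarith

lemma mean_abs_le_one_add_mean_sq (w : ℕ → ℝ) (n : ℕ) :
    (∑ i ∈ Finset.range n, |w i|) / n ≤ 1 + (∑ i ∈ Finset.range n, w i ^ 2) / n := by
  have hterm (i : ℕ) : |w i| ≤ 1 + w i ^ 2 := by
    nlinarith [sq_nonneg (|w i| - 1), sq_abs (w i), abs_nonneg (w i)]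
  calc (∑ i ∈ Finset.range n, |w i|) / n
      ≤ (∑ i ∈ Finset.range n, (1 + w i ^ 2)) / n := by gcongr; exact hterm _
    _ = n / n + (∑ i ∈ Finset.range n, w i ^ 2) / n := by
        simp [Finset.sum_add_distrib, add_div]
    _ ≤ _ := by gcongr; exact div_self_le_one _

theorem tendstoUniformly_mean_sq_add {ι : Type*} {F : ι → ℝ → ℝ} {e : ℕ → ℝ} {B v : ℝ}
    (hF : UniformEquicontinuousOn F (Icc 0 1)) (hB : ∀ i, ∀ t ∈ Icc (0 : ℝ) 1, |F i t| ≤ B)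
    (he : Tendsto (fun n : ℕ ↦ (∑ j ∈ Finset.range n, e j) / n) atTop (𝓝 0))
    (he₂ : Tendsto (fun n : ℕ ↦ (∑ j ∈ Finset.range n, e j ^ 2) / n) atTop (𝓝 v)) :
    TendstoUniformly
      (fun (n : ℕ) i ↦ (∑ j ∈ Finset.range n, (F i ((j + 1) / n) + e j) ^ 2) / n)
      (fun i ↦ (∫ t in (0 : ℝ)..1, F i t ^ 2) + v) atTop := by
  have hF₂ : UniformEquicontinuousOn (fun i t ↦ F i t ^ 2) (Icc 0 1) :=
    uniformEquicontinuousOn_comp_left (t := Icc (-B) B) (φ := fun y ↦ y ^ 2)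
      (isCompact_Icc.uniformContinuousOn_of_continuous (by fun_prop)) hF
      fun i t ht ↦ abs_le.1 (hB i t ht)
  have hB₂ (i : ι) (t : ℝ) (ht : t ∈ Icc (0 : ℝ) 1) : |F i t ^ 2| ≤ B ^ 2 := by
    rw [abs_pow]
    exact pow_le_pow_left₀ (abs_nonneg _) (hB i t ht) 2
  have hone : Tendsto (fun n : ℕ ↦ (∑ _j ∈ Finset.range n, (1 : ℝ)) / n) atTop (𝓝 1) := by
    refine tendsto_const_nhds.congr' ?_
    filter_upwards [eventually_ne_atTop 0] with n hn
    have : (n : ℝ) ≠ 0 := mod_cast hn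
    simp [this]
  have hsignal := tendstoUniformly_weightedRiemannSum (W := 1) hF₂ hB₂ hone fun n ↦ by
    simpa using div_self_le_one (n : ℝ)
  obtain ⟨C, hC⟩ := he₂.bddAbove_range
  have hcross := tendstoUniformly_weightedRiemannSum (W := 1 + C) hF hB he fun n ↦
    (mean_abs_le_one_add_mean_sq e n).trans (by gcongr; exact hC (mem_range_self n))
  have hexpand (n : ℕ) (i : ι) :
      (∑ j ∈ Finset.range n, (F i ((j + 1) / n) + e j) ^ 2) / n =
        weightedRiemannSum (fun _ ↦ 1) (fun t ↦ F i t ^ 2) n +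
          (weightedRiemannSum e (F i) n + weightedRiemannSum e (F i) n) +
          (∑ j ∈ Finset.range n, e j ^ 2) / n := by
    simp only [weightedRiemannSum, ← add_div, ← Finset.sum_add_distrib]
    congr! 2
    ring
  have hlimit (i : ι) : (∫ t in (0 : ℝ)..1, F i t ^ 2) + v =
      1 * (∫ t in (0 : ℝ)..1, F i t ^ 2) +
        (0 * (∫ t in (0 : ℝ)..1, F i t) + 0 * ∫ t in (0 : ℝ)..1, F i t) + v := by ring
  simp only [hexpand, hlimit]
  exact (hsignal.add (hcross.add hcross)).add he₂.tendstoUniformly_const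

/-! ### A strong law for orthogonal random variables -/

section OrthogonalStrongLaw

variable {Ω : Type*} [MeasurableSpace Ω] {μ : Measure Ω}

lemma integral_sq_sum_of_orthogonal {ι : Type*} {X : ι → Ω → ℝ} (hX : ∀ i, MemLp (X i) 2 μ)
    (horth : Pairwise fun i j ↦ ∫ ω, X i ω * X j ω ∂μ = 0) (s : Finset ι) :
    ∫ ω, (∑ i ∈ s, X i ω) ^ 2 ∂μ = ∑ i ∈ s, ∫ ω, X i ω ^ 2 ∂μ := by
  have hint (i j : ι) : Integrable (fun ω ↦ X i ω * X j ω) μ := (hX i).integrable_mul (hX j)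
  simp_rw [sq, Finset.sum_mul_sum]
  rw [integral_finsetSum _ fun i _ ↦ integrable_finsetSum _ fun j _ ↦ hint i j]
  refine Finset.sum_congr rfl fun i hi ↦ ?_
  rw [integral_finsetSum _ fun j _ ↦ hint i j]
  exact Finset.sum_eq_single_of_mem i hi fun j _ hji ↦ horth hji.symm

lemma ae_summable_norm_of_summable_integral_norm {E : Type*} [NormedAddCommGroup E]
    {f : ℕ → Ω → E} (hf : ∀ k, Integrable (f k) μ) (hsum : Summable fun k ↦ ∫ ω, ‖f k ω‖ ∂μ) :
    ∀ᵐ ω ∂μ, Summable fun k ↦ ‖f k ω‖ := by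
  refine summable_norm_of_tsum_eLpNorm_ne_top le_rfl (fun k ↦ (hf k).aestronglyMeasurable) ?_
  simp_rw [eLpNorm_one_eq_lintegral_enorm, ← ofReal_integral_norm_eq_lintegral_enorm (hf _)]
  exact hsum.tsum_ofReal_ne_top

lemma ae_tendsto_zero_of_integral_sq_le {f : ℕ → Ω → ℝ} {c : ℕ → ℝ}
    (hf : ∀ k, MemLp (f k) 2 μ) (hle : ∀ k, ∫ ω, f k ω ^ 2 ∂μ ≤ c k) (hc : Summable c) :
    ∀ᵐ ω ∂μ, Tendsto (fun k ↦ f k ω) atTop (𝓝 0) := by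
  have hsum : Summable fun k ↦ ∫ ω, ‖f k ω ^ 2‖ ∂μ :=
    hc.of_nonneg_of_le (fun k ↦ by positivity) fun k ↦ by simpa using hle k
  filter_upwards [ae_summable_norm_of_summable_integral_norm (fun k ↦ (hf k).integrable_sq) hsum]
    with ω hω
  have hsq := hω.tendsto_atTop_zero
  exact (tendsto_zero_iff_abs_tendsto_zero _).2 <| by
    simpa [Real.sqrt_sq_eq_abs, Function.comp_def] using hsq.sqrt

lemma tendsto_nat_sqrt_atTop : Tendsto Nat.sqrt atTop atTop :=
  tendsto_atTop.2 fun b ↦ (eventually_ge_atTop (b ^ 2)).mono fun _ hn ↦ Nat.le_sqrt'.2 hn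

lemma tendsto_mean_zero_of_tendsto_squares {a : ℕ → ℝ}
    (hsq : Tendsto (fun k : ℕ ↦ (∑ i ∈ Finset.range (k ^ 2), a i) / (k : ℝ) ^ 2) atTop (𝓝 0))
    (hgap : Tendsto (fun k : ℕ ↦ (∑ i ∈ Finset.Ico (k ^ 2) ((k + 1) ^ 2), |a i|) / (k : ℝ) ^ 2)
      atTop (𝓝 0)) :
    Tendsto (fun n : ℕ ↦ (∑ i ∈ Finset.range n, a i) / n) atTop (𝓝 0) := by
  refine squeeze_zero_norm' ?_
    (by simpa using (hsq.abs.add hgap).comp tendsto_nat_sqrt_atTop)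
  filter_upwards [eventually_ge_atTop 1] with n hn
  have : 0 < Nat.sqrt n := Nat.sqrt_pos.2 hn
  have hlow : n.sqrt ^ 2 ≤ n := Nat.sqrt_le' n
  have hupp : n ≤ (n.sqrt + 1) ^ 2 := (Nat.lt_succ_sqrt' n).le
  have hsum : |∑ i ∈ Finset.range n, a i| ≤ |∑ i ∈ Finset.range (n.sqrt ^ 2), a i| +
      ∑ i ∈ Finset.Ico (n.sqrt ^ 2) ((n.sqrt + 1) ^ 2), |a i| := by
    rw [← Finset.sum_range_add_sum_Ico _ hlow]
    refine (abs_add_le _ _).trans (add_le_add_right ?_ _)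
    exact (Finset.abs_sum_le_sum_abs _ _).trans (Finset.sum_le_sum_of_subset_of_nonneg
      (Finset.Ico_subset_Ico_right hupp) fun _ _ _ ↦ abs_nonneg _)
  rw [Real.norm_eq_abs, abs_div, Nat.abs_cast, Function.comp_apply, abs_div,
    abs_of_nonneg (sq_nonneg (n.sqrt : ℝ)), ← add_div]
  gcongr
  exact mod_cast hlow

lemma integral_sq_sum_abs_le {ι : Type*} {X : ι → Ω → ℝ} {C : ℝ} (hX : ∀ i, MemLp (X i) 2 μ)
    (hC : ∀ i, ∫ ω, X i ω ^ 2 ∂μ ≤ C) (s : Finset ι) :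
    ∫ ω, (∑ i ∈ s, |X i ω|) ^ 2 ∂μ ≤ s.card ^ 2 * C := by
  have hle (ω : Ω) : (∑ i ∈ s, |X i ω|) ^ 2 ≤ s.card * ∑ i ∈ s, X i ω ^ 2 := by
    simpa using sq_sum_le_card_mul_sum_sq (s := s) (f := fun i ↦ |X i ω|)
  calc ∫ ω, (∑ i ∈ s, |X i ω|) ^ 2 ∂μ
      ≤ ∫ ω, s.card * ∑ i ∈ s, X i ω ^ 2 ∂μ :=
        integral_mono (memLp_finsetSum _ fun i _ ↦ (hX i).abs).integrable_sq
          ((integrable_finsetSum _ fun i _ ↦ (hX i).integrable_sq).const_mul _) hle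
    _ = s.card * ∑ i ∈ s, ∫ ω, X i ω ^ 2 ∂μ := by
        rw [integral_const_mul, integral_finsetSum _ fun i _ ↦ (hX i).integrable_sq]
    _ ≤ s.card * ∑ _i ∈ s, C := by gcongr; exact hC _
    _ = s.card ^ 2 * C := by rw [Finset.sum_const, nsmul_eq_mul]; ring

lemma ae_tendsto_sum_range_sq_div {X : ℕ → Ω → ℝ} {C : ℝ} (hX : ∀ i, MemLp (X i) 2 μ)
    (horth : Pairwise fun i j ↦ ∫ ω, X i ω * X j ω ∂μ = 0) (hC : ∀ i, ∫ ω, X i ω ^ 2 ∂μ ≤ C) :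
    ∀ᵐ ω ∂μ, Tendsto (fun k : ℕ ↦ (∑ i ∈ Finset.range (k ^ 2), X i ω) / (k : ℝ) ^ 2)
      atTop (𝓝 0) := by
  refine ae_tendsto_zero_of_integral_sq_le
    (fun k ↦ (memLp_finsetSum _ fun i _ ↦ hX i).mul_const _) (fun k ↦ ?_)
    ((Real.summable_one_div_nat_pow.2 one_lt_two).mul_left C)
  simp_rw [div_pow]
  rw [integral_div, integral_sq_sum_of_orthogonal hX horth]
  calc (∑ i ∈ Finset.range (k ^ 2), ∫ ω, X i ω ^ 2 ∂μ) / ((k : ℝ) ^ 2) ^ 2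
      ≤ (∑ _i ∈ Finset.range (k ^ 2), C) / ((k : ℝ) ^ 2) ^ 2 := by gcongr; exact hC _
    _ = C * (1 / (k : ℝ) ^ 2) := by
      rw [Finset.sum_const, Finset.card_range, nsmul_eq_mul]
      push_cast
      field_simp

lemma ae_tendsto_sum_Ico_sq_abs_div {X : ℕ → Ω → ℝ} {C : ℝ} (hX : ∀ i, MemLp (X i) 2 μ)
    (hC : ∀ i, ∫ ω, X i ω ^ 2 ∂μ ≤ C) :
    ∀ᵐ ω ∂μ, Tendsto (fun k : ℕ ↦ (∑ i ∈ Finset.Ico (k ^ 2) ((k + 1) ^ 2), |X i ω|) / (k : ℝ) ^ 2)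
      atTop (𝓝 0) := by
  have hC₀ : 0 ≤ C := (integral_nonneg fun ω ↦ sq_nonneg (X 0 ω)).trans (hC 0)
  refine ae_tendsto_zero_of_integral_sq_le
    (fun k ↦ (memLp_finsetSum _ fun i _ ↦ (hX i).abs).mul_const _) (fun k ↦ ?_)
    ((Real.summable_one_div_nat_pow.2 one_lt_two).mul_left (9 * C))
  obtain rfl | hk := k.eq_zero_or_pos
  · simp
  have hcard : (Finset.Ico (k ^ 2) ((k + 1) ^ 2)).card ≤ 3 * k := by
    rw [Nat.card_Ico, tsub_le_iff_right]
    nlinarith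
  simp_rw [div_pow]
  rw [integral_div]
  calc (∫ ω, (∑ i ∈ Finset.Ico (k ^ 2) ((k + 1) ^ 2), |X i ω|) ^ 2 ∂μ) / ((k : ℝ) ^ 2) ^ 2
      ≤ ((3 * k : ℕ) : ℝ) ^ 2 * C / ((k : ℝ) ^ 2) ^ 2 := by
        gcongr
        exact (integral_sq_sum_abs_le hX hC _).trans (by gcongr)
    _ = 9 * C * (1 / (k : ℝ) ^ 2) := by push_cast; field_simp; ring

theorem ae_tendsto_mean_zero_of_orthogonal {X : ℕ → Ω → ℝ} {C : ℝ} (hX : ∀ i, MemLp (X i) 2 μ)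
    (horth : Pairwise fun i j ↦ ∫ ω, X i ω * X j ω ∂μ = 0) (hC : ∀ i, ∫ ω, X i ω ^ 2 ∂μ ≤ C) :
    ∀ᵐ ω ∂μ, Tendsto (fun n : ℕ ↦ (∑ i ∈ Finset.range n, X i ω) / n) atTop (𝓝 0) := by
  filter_upwards [ae_tendsto_sum_range_sq_div hX horth hC, ae_tendsto_sum_Ico_sq_abs_div hX hC]
    with ω using tendsto_mean_zero_of_tendsto_squares

end OrthogonalStrongLaw

/-! ### First-order linear recursions -/

section Recursion

lemma tendsto_zero_of_eventually_le_mul_add {r β : ℕ → ℝ} {ρ : ℝ} (hr : ∀ n, 0 ≤ r n)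
    (hρ₀ : 0 ≤ ρ) (hρ₁ : ρ < 1) (hstep : ∀ᶠ n in atTop, r (n + 1) ≤ ρ * r n + β n)
    (hβ : Tendsto β atTop (𝓝 0)) : Tendsto r atTop (𝓝 0) := by
  refine tendsto_order.2 ⟨fun a ha ↦ .of_forall fun n ↦ ha.trans_le (hr n), fun a ha ↦ ?_⟩
  have hδ : 0 < (1 - ρ) * (a / 2) := mul_pos (sub_pos.2 hρ₁) (half_pos ha)
  obtain ⟨N, hN⟩ := eventually_atTop.1 (hstep.and (hβ.eventually_le_const hδ))
  have hbound (k : ℕ) : r (k + N) ≤ ρ ^ k * r N + a / 2 := by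
    induction k with
    | zero => simpa using (half_pos ha).le
    | succ k ih =>
      obtain ⟨hrec, hle⟩ := hN (k + N) (by omega)
      rw [Nat.add_right_comm]
      calc r (k + N + 1) ≤ ρ * (ρ ^ k * r N + a / 2) + (1 - ρ) * (a / 2) :=
            hrec.trans (by gcongr)
        _ = ρ ^ (k + 1) * r N + a / 2 := by ring
  have hpow : Tendsto (fun k ↦ ρ ^ k * r N) atTop (𝓝 0) := by
    simpa using (tendsto_pow_atTop_nhds_zero_of_lt_one hρ₀ hρ₁).mul_const (r N)
  rw [← map_add_atTop_eq_nat N, eventually_map]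
  filter_upwards [hpow.eventually_lt_const (half_pos ha)] with k hk
  linarith [hbound k]

lemma tendsto_div_succ_of_tendsto_mean {a : ℕ → ℝ} {c : ℝ}
    (ha : Tendsto (fun n : ℕ ↦ (∑ i ∈ Finset.range n, a i) / n) atTop (𝓝 c)) :
    Tendsto (fun n : ℕ ↦ a n / (n + 1)) atTop (𝓝 0) := by
  have hshift : Tendsto (fun n : ℕ ↦ (∑ i ∈ Finset.range (n + 1), a i) / ((n + 1 : ℕ) : ℝ)) atTop
    (𝓝 c) := ha.comp (tendsto_add_atTop_nat 1)
  have hlim := hshift.sub (ha.mul (tendsto_natCast_div_add_atTop (1 : ℝ)))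
  rw [mul_one, sub_self] at hlim
  refine hlim.congr fun n ↦ ?_
  obtain rfl | hn := eq_or_ne n 0
  · simp
  have : (n : ℝ) ≠ 0 := mod_cast hn
  rw [Finset.sum_range_succ]
  push_cast
  field_simp
  ring

lemma mul_add_sq_le {φ : ℝ} (hφ : |φ| < 1) (a b : ℝ) :
    (φ * a + b) ^ 2 ≤ |φ| * a ^ 2 + b ^ 2 / (1 - |φ|) := by
  have hφ' : 0 < 1 - |φ| := sub_pos.2 hφ
  rw [← sub_le_iff_le_add', le_div_iff₀ hφ']
  obtain h | h := abs_choice φ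
  · have := mul_nonneg (abs_nonneg φ) (sq_nonneg ((1 - |φ|) * a - b))
    rw [h] at this ⊢
    linarith
  · have := mul_nonneg (abs_nonneg φ) (sq_nonneg ((1 - |φ|) * a + b))
    rw [h] at this ⊢
    linarith

variable {u e : ℕ → ℝ} {φ s : ℝ}

lemma tendsto_sq_div_of_recursion (hφ : |φ| < 1) (hrec : ∀ n, e (n + 1) = φ * e n + u n)
    (hu₂ : Tendsto (fun n : ℕ ↦ (∑ i ∈ Finset.range n, u i ^ 2) / n) atTop (𝓝 s)) :
    Tendsto (fun n : ℕ ↦ e n ^ 2 / n) atTop (𝓝 0) := by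
  have hφ' : 0 < 1 - |φ| := sub_pos.2 hφ
  refine tendsto_zero_of_eventually_le_mul_add (fun n ↦ by positivity) (abs_nonneg φ) hφ
    (β := fun n ↦ u n ^ 2 / (n + 1) / (1 - |φ|)) ?_
    (by simpa using (tendsto_div_succ_of_tendsto_mean hu₂).div_const (1 - |φ|))
  filter_upwards [eventually_gt_atTop 0] with n hn
  have : (0 : ℝ) < n := mod_cast hn
  calc e (n + 1) ^ 2 / (n + 1 : ℕ) ≤ (|φ| * e n ^ 2 + u n ^ 2 / (1 - |φ|)) / (n + 1 : ℕ) := by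
        rw [hrec]; gcongr; exact mul_add_sq_le hφ _ _
    _ = |φ| * (e n ^ 2 / (n + 1)) + u n ^ 2 / (n + 1) / (1 - |φ|) := by push_cast; field_simp
    _ ≤ |φ| * (e n ^ 2 / n) + u n ^ 2 / (n + 1) / (1 - |φ|) := by gcongr; linarith

lemma tendsto_div_of_tendsto_sq_div {a : ℕ → ℝ}
    (ha : Tendsto (fun n : ℕ ↦ a n ^ 2 / n) atTop (𝓝 0)) :
    Tendsto (fun n : ℕ ↦ a n / n) atTop (𝓝 0) := by
  refine squeeze_zero_norm (fun n ↦ ?_)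
    (by simpa using (tendsto_one_div_atTop_nhds_zero_nat (𝕜 := ℝ)).add ha)
  rw [Real.norm_eq_abs, abs_div, Nat.abs_cast, inv_eq_one_div, ← add_div]
  gcongr
  nlinarith [sq_nonneg (|a n| - 1), sq_abs (a n), abs_nonneg (a n)]

lemma tendsto_mean_of_recursion (hφ : |φ| < 1) (hrec : ∀ n, e (n + 1) = φ * e n + u n)
    (hu : Tendsto (fun n : ℕ ↦ (∑ i ∈ Finset.range n, u i) / n) atTop (𝓝 0))
    (hu₂ : Tendsto (fun n : ℕ ↦ (∑ i ∈ Finset.range n, u i ^ 2) / n) atTop (𝓝 s)) :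
    Tendsto (fun n : ℕ ↦ (∑ i ∈ Finset.range n, e i) / n) atTop (𝓝 0) := by
  have hφ' : 1 - φ ≠ 0 := (sub_pos.2 (lt_of_abs_lt hφ)).ne'
  have hboundary := (tendsto_div_of_tendsto_sq_div (tendsto_sq_div_of_recursion hφ hrec hu₂)).sub
    (tendsto_const_div_atTop_nhds_zero_nat (e 0))
  have hsum (n : ℕ) : (1 - φ) * ∑ i ∈ Finset.range n, e i =
      ∑ i ∈ Finset.range n, u i - (e n - e 0) := by
    rw [← Finset.sum_range_sub, ← Finset.sum_sub_distrib, Finset.mul_sum]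
    exact Finset.sum_congr rfl fun i _ ↦ by rw [hrec]; ring
  have hlim := (hu.sub hboundary).div_const (1 - φ)
  simp only [sub_self, zero_div] at hlim
  refine hlim.congr fun n ↦ ?_
  rw [← sub_div, ← sub_div, ← hsum]
  field_simp

lemma tendsto_mean_sq_of_recursion (hφ : |φ| < 1) (hrec : ∀ n, e (n + 1) = φ * e n + u n)
    (hu₂ : Tendsto (fun n : ℕ ↦ (∑ i ∈ Finset.range n, u i ^ 2) / n) atTop (𝓝 s))
    (hcross : Tendsto (fun n : ℕ ↦ (∑ i ∈ Finset.range n, e i * u i) / n) atTop (𝓝 0)) :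
    Tendsto (fun n : ℕ ↦ (∑ i ∈ Finset.range n, e i ^ 2) / n) atTop (𝓝 (s / (1 - φ ^ 2))) := by
  have hφ' : 1 - φ ^ 2 ≠ 0 := (sub_pos.2 ((sq_lt_one_iff_abs_lt_one φ).2 hφ)).ne'
  have hboundary := (tendsto_sq_div_of_recursion hφ hrec hu₂).sub
    (tendsto_const_div_atTop_nhds_zero_nat (e 0 ^ 2))
  have hsum (n : ℕ) : (1 - φ ^ 2) * ∑ i ∈ Finset.range n, e i ^ 2 =
      2 * φ * ∑ i ∈ Finset.range n, e i * u i + ∑ i ∈ Finset.range n, u i ^ 2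
        - (e n ^ 2 - e 0 ^ 2) := by
    rw [← Finset.sum_range_sub (fun i ↦ e i ^ 2), Finset.mul_sum, Finset.mul_sum,
      ← Finset.sum_add_distrib, ← Finset.sum_sub_distrib]
    exact Finset.sum_congr rfl fun i _ ↦ by rw [hrec]; ring
  have hlim := (((hcross.const_mul (2 * φ)).add hu₂).sub hboundary).div_const (1 - φ ^ 2)
  simp only [mul_zero, zero_add, sub_zero] at hlim
  refine hlim.congr fun n ↦ ?_
  rw [← mul_div_assoc, ← sub_div, ← add_div, ← sub_div, ← hsum]
  field_simp

/-- The solution of the AR(1) recursion driven by `u` and started at `0`, with indices shifted so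
that `arOne φ u n` depends only on `u 0, …, u (n - 1)`. -/
def arOne (φ : ℝ) (u : ℕ → ℝ) : ℕ → ℝ
  | 0 => 0
  | n + 1 => φ * arOne φ u n + u n

lemma eq_arOne_add (hrec : ∀ n, e (n + 1) = φ * e n + u n) (n : ℕ) :
    e n = arOne φ u n + φ ^ n * e 0 := by
  induction n with
  | zero => simp [arOne]
  | succ n ih => rw [hrec, arOne, ih]; ring

lemma tendsto_mean_pow_mul {c : ℝ} (hφ : |φ| < 1)
    (hu : Tendsto (fun n : ℕ ↦ (∑ i ∈ Finset.range n, u i) / n) atTop (𝓝 c)) :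
    Tendsto (fun n : ℕ ↦ (∑ i ∈ Finset.range n, φ ^ i * u i) / n) atTop (𝓝 0) := by
  have hpow : Tendsto (fun n : ℕ ↦ (n + 1 : ℝ) * φ ^ n) atTop (𝓝 0) := by
    simpa [add_mul] using (tendsto_self_mul_const_pow_of_abs_lt_one hφ).add
      (tendsto_pow_atTop_nhds_zero_of_abs_lt_one hφ)
  have hterm : Tendsto (fun n ↦ φ ^ n * u n) atTop (𝓝 0) := by
    have := hpow.mul (tendsto_div_succ_of_tendsto_mean hu)
    rw [mul_zero] at this
    refine this.congr fun n ↦ ?_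
    have : (n : ℝ) + 1 ≠ 0 := by positivity
    field_simp
  simpa [div_eq_inv_mul] using hterm.cesaro

lemma tendsto_mean_mul_of_recursion {c : ℝ} (hφ : |φ| < 1) (hrec : ∀ n, e (n + 1) = φ * e n + u n)
    (hu : Tendsto (fun n : ℕ ↦ (∑ i ∈ Finset.range n, u i) / n) atTop (𝓝 c))
    (hcross : Tendsto (fun n : ℕ ↦ (∑ i ∈ Finset.range n, arOne φ u i * u i) / n) atTop (𝓝 0)) :
    Tendsto (fun n : ℕ ↦ (∑ i ∈ Finset.range n, e i * u i) / n) atTop (𝓝 0) := by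
  have hlim := hcross.add ((tendsto_mean_pow_mul hφ hu).const_mul (e 0))
  rw [mul_zero, add_zero] at hlim
  refine hlim.congr fun n ↦ ?_
  rw [← mul_div_assoc, ← add_div, Finset.mul_sum, ← Finset.sum_add_distrib]
  congr 1
  exact Finset.sum_congr rfl fun i _ ↦ by rw [eq_arOne_add hrec i]; ring

end Recursion

/-! ### Autoregressive noise -/

section PredictableMultiplier

variable {Ω : Type*} {U : ℕ → Ω → ℝ}

/-- The σ-algebra of the strict past `U 0, …, U (n - 1)` of a process `U`. It is not a
`Filtration`, so that `U` need not be assumed measurable. -/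
abbrev strictPast (U : ℕ → Ω → ℝ) (n : ℕ) : MeasurableSpace Ω :=
  ⨆ k ∈ Iio n, MeasurableSpace.comap (U k) inferInstance

lemma monotone_strictPast (U : ℕ → Ω → ℝ) : Monotone (strictPast U) := fun _ _ hmn ↦
  biSup_mono fun _ hk ↦ Iio_subset_Iio hmn hk

lemma measurable_strictPast {k n : ℕ} (hkn : k < n) : Measurable[strictPast U n] (U k) :=
  measurable_iff_comap_le.2 <|
    le_biSup (fun j ↦ MeasurableSpace.comap (U j) inferInstance) (mem_Iio.2 hkn)

variable [MeasurableSpace Ω] {μ : Measure Ω}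

lemma strictPast_le (hU : ∀ n, Measurable (U n)) (n : ℕ) : strictPast U n ≤ ‹MeasurableSpace Ω› :=
  iSup₂_le fun k _ ↦ (hU k).comap_le

lemma indepFun_of_measurable_strictPast (hU : ∀ n, Measurable (U n)) (hindep : iIndepFun U μ)
    {n : ℕ} {W : Ω → ℝ} (hW : Measurable[strictPast U n] W) : IndepFun W (U n) μ := by
  have h := indep_iSup_of_disjoint (fun k ↦ (hU k).comap_le) hindep.iIndep
    (disjoint_singleton_right.2 (notMem_Iio.2 le_rfl) : Disjoint (Iio n) {n})
  rw [iSup_singleton] at h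
  exact indep_of_indep_of_le_left h hW.comap_le

lemma memLp_two_mul_of_indepFun {X Y : Ω → ℝ} (hXY : IndepFun X Y μ) (hX : MemLp X 2 μ)
    (hY : MemLp Y 2 μ) : MemLp (fun ω ↦ X ω * Y ω) 2 μ := by
  have hsq : IndepFun (fun ω ↦ X ω ^ 2) (fun ω ↦ Y ω ^ 2) μ :=
    hXY.comp (φ := fun x ↦ x ^ 2) (ψ := fun x ↦ x ^ 2) (by fun_prop) (by fun_prop)
  refine (memLp_two_iff_integrable_sq (hX.1.mul hY.1)).2 ?_
  simp_rw [Pi.mul_apply, mul_pow]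
  exact hsq.integrable_mul hX.integrable_sq hY.integrable_sq

theorem ae_tendsto_mean_mul_zero_of_predictable {W : ℕ → Ω → ℝ} {C s : ℝ}
    (hU : ∀ n, Measurable (U n)) (hindep : iIndepFun U μ) (hU₂ : ∀ n, MemLp (U n) 2 μ)
    (hmean : ∀ n, ∫ ω, U n ω ∂μ = 0) (hvar : ∀ n, ∫ ω, U n ω ^ 2 ∂μ = s)
    (hW : ∀ n, Measurable[strictPast U n] (W n)) (hW₂ : ∀ n, MemLp (W n) 2 μ)
    (hC : ∀ n, ∫ ω, W n ω ^ 2 ∂μ ≤ C) :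
    ∀ᵐ ω ∂μ, Tendsto (fun n : ℕ ↦ (∑ i ∈ Finset.range n, W i ω * U i ω) / n) atTop (𝓝 0) := by
  have hWU (n : ℕ) : IndepFun (W n) (U n) μ := indepFun_of_measurable_strictPast hU hindep (hW n)
  have horth {i j : ℕ} (hij : i < j) : ∫ ω, W i ω * U i ω * (W j ω * U j ω) ∂μ = 0 := by
    have hpast : Measurable[strictPast U j] fun ω ↦ W i ω * U i ω * W j ω :=
      (((hW i).mono (monotone_strictPast U hij.le) le_rfl).mul
        (measurable_strictPast hij)).mul (hW j)
    simp_rw [← mul_assoc]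
    rw [(indepFun_of_measurable_strictPast hU hindep hpast).integral_fun_mul_eq_mul_integral
      (hpast.mono (strictPast_le hU j) le_rfl).aestronglyMeasurable (hU j).aestronglyMeasurable,
      hmean, mul_zero]
  refine ae_tendsto_mean_zero_of_orthogonal (C := C * s)
    (fun n ↦ memLp_two_mul_of_indepFun (hWU n) (hW₂ n) (hU₂ n)) (fun i j hij ↦ ?_) fun n ↦ ?_
  · obtain hij | hji := hij.lt_or_gt
    · exact horth hij
    · simpa only [mul_comm] using horth hji
  · have hsq : IndepFun (fun ω ↦ W n ω ^ 2) (fun ω ↦ U n ω ^ 2) μ :=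
      (hWU n).comp (φ := fun x ↦ x ^ 2) (ψ := fun x ↦ x ^ 2) (by fun_prop) (by fun_prop)
    simp_rw [mul_pow]
    rw [hsq.integral_fun_mul_eq_mul_integral (hW₂ n).integrable_sq.1 (hU₂ n).integrable_sq.1, hvar]
    have hs : 0 ≤ s := hvar n ▸ integral_nonneg fun ω ↦ sq_nonneg (U n ω)
    gcongr
    exact hC n

end PredictableMultiplier

section ArOneNoise

variable {Ω : Type*}

lemma measurable_arOne (φ : ℝ) (U : ℕ → Ω → ℝ) (n : ℕ) :
    Measurable[strictPast U n] fun ω ↦ arOne φ (fun i ↦ U i ω) n := by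
  induction n with
  | zero => exact @measurable_const _ _ _ (strictPast U 0) 0
  | succ n ih =>
    exact ((ih.mono (monotone_strictPast U n.le_succ) le_rfl).const_mul φ).add
      (measurable_strictPast n.lt_succ_self)

variable [MeasurableSpace Ω] {μ : Measure Ω} {U : ℕ → Ω → ℝ} {φ s : ℝ}

lemma memLp_arOne (hU₂ : ∀ n, MemLp (U n) 2 μ) (φ : ℝ) (n : ℕ) :
    MemLp (fun ω ↦ arOne φ (fun i ↦ U i ω) n) 2 μ := by
  induction n with
  | zero => exact MemLp.zero'
  | succ n ih => exact (ih.const_mul φ).add (hU₂ n)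

lemma integral_sq_arOne_le (hφ : |φ| < 1) (hU : ∀ n, Measurable (U n)) (hindep : iIndepFun U μ)
    (hU₂ : ∀ n, MemLp (U n) 2 μ) (hmean : ∀ n, ∫ ω, U n ω ∂μ = 0)
    (hvar : ∀ n, ∫ ω, U n ω ^ 2 ∂μ = s) (n : ℕ) :
    ∫ ω, arOne φ (fun i ↦ U i ω) n ^ 2 ∂μ ≤ s / (1 - φ ^ 2) := by
  have hφ' : 0 < 1 - φ ^ 2 := sub_pos.2 ((sq_lt_one_iff_abs_lt_one φ).2 hφ)
  have hs : 0 ≤ s := hvar 0 ▸ integral_nonneg fun ω ↦ sq_nonneg (U 0 ω)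
  induction n with
  | zero => simpa [arOne] using div_nonneg hs hφ'.le
  | succ n ih =>
    set V : Ω → ℝ := fun ω ↦ arOne φ (fun i ↦ U i ω) n
    have hV : MemLp V 2 μ := memLp_arOne hU₂ φ n
    have hcross : ∫ ω, V ω * U n ω ∂μ = 0 := by
      rw [(indepFun_of_measurable_strictPast hU hindep
        (measurable_arOne φ U n)).integral_fun_mul_eq_mul_integral hV.1 (hU₂ n).1, hmean, mul_zero]
    have hexpand (ω : Ω) : arOne φ (fun i ↦ U i ω) (n + 1) ^ 2 =
        φ ^ 2 * V ω ^ 2 + 2 * φ * (V ω * U n ω) + U n ω ^ 2 := by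
      simp only [arOne, V]; ring
    have hsq : Integrable (fun ω ↦ φ ^ 2 * V ω ^ 2) μ := hV.integrable_sq.const_mul (φ ^ 2)
    have hmul : Integrable (fun ω ↦ 2 * φ * (V ω * U n ω)) μ :=
      (hV.integrable_mul (hU₂ n)).const_mul (2 * φ)
    have hadd : Integrable (fun ω ↦ φ ^ 2 * V ω ^ 2 + 2 * φ * (V ω * U n ω)) μ := hsq.add hmul
    simp_rw [hexpand]
    rw [integral_add hadd (hU₂ n).integrable_sq, integral_add hsq hmul,
      integral_const_mul, integral_const_mul, hcross, hvar]
    calc φ ^ 2 * ∫ ω, V ω ^ 2 ∂μ + 2 * φ * 0 + s ≤ φ ^ 2 * (s / (1 - φ ^ 2)) + 2 * φ * 0 + s := by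
          gcongr
      _ = s / (1 - φ ^ 2) := by field_simp; ring

theorem ae_tendsto_means_of_arOne_noise {e : ℕ → Ω → ℝ} (hφ : |φ| < 1)
    (hU : ∀ n, Measurable (U n)) (hindep : iIndepFun U μ)
    (hident : ∀ n, IdentDistrib (U n) (U 0) μ μ) (hU₂ : MemLp (U 0) 2 μ)
    (hmean : ∫ ω, U 0 ω ∂μ = 0) (hvar : ∫ ω, U 0 ω ^ 2 ∂μ = s)
    (hrec : ∀ᵐ ω ∂μ, ∀ n, e (n + 1) ω = φ * e n ω + U n ω) :
    ∀ᵐ ω ∂μ, Tendsto (fun n : ℕ ↦ (∑ i ∈ Finset.range n, e i ω) / n) atTop (𝓝 0) ∧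
      Tendsto (fun n : ℕ ↦ (∑ i ∈ Finset.range n, e i ω ^ 2) / n) atTop
        (𝓝 (s / (1 - φ ^ 2))) := by
  have hprob : IsProbabilityMeasure μ := hindep.isProbabilityMeasure
  have hident_sq (n : ℕ) : IdentDistrib (fun ω ↦ U n ω ^ 2) (fun ω ↦ U 0 ω ^ 2) μ μ :=
    (hident n).comp (u := fun x ↦ x ^ 2) (by fun_prop)
  have hU₂' (n : ℕ) : MemLp (U n) 2 μ := (hident n).memLp_iff.2 hU₂
  have hmean' (n : ℕ) : ∫ ω, U n ω ∂μ = 0 := (hident n).integral_eq.trans hmean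
  have hvar' (n : ℕ) : ∫ ω, U n ω ^ 2 ∂μ = s := (hident_sq n).integral_eq.trans hvar
  have hlln := strong_law_ae_real U (hU₂.integrable one_le_two)
    (fun i j hij ↦ hindep.indepFun hij) hident
  have hlln_sq := strong_law_ae_real (fun n ω ↦ U n ω ^ 2) hU₂.integrable_sq
    (fun i j hij ↦ (hindep.indepFun hij).comp (φ := fun x ↦ x ^ 2) (ψ := fun x ↦ x ^ 2)
      (by fun_prop) (by fun_prop)) hident_sq
  have hcross := ae_tendsto_mean_mul_zero_of_predictable hU hindep hU₂' hmean' hvar'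
    (measurable_arOne φ U) (memLp_arOne hU₂' φ)
    (integral_sq_arOne_le hφ hU hindep hU₂' hmean' hvar')
  rw [hmean] at hlln
  rw [hvar] at hlln_sq
  filter_upwards [hlln, hlln_sq, hcross, hrec] with ω hu hu₂ hmul hω
  exact ⟨tendsto_mean_of_recursion hφ hω hu hu₂,
    tendsto_mean_sq_of_recursion hφ hω hu₂ (tendsto_mean_mul_of_recursion hφ hω hu hmul)⟩

end ArOneNoise

/-! ### The regression model -/

section Model

/-- The mean of the log-observations at `w ∈ [0, Δ]` under the parameters `(γ, g)`. -/
noncomputable def logMean (x z : ℝ → ℝ) (γ : ℝ) (g : ℝ → ℝ) (w : ℝ) : ℝ :=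
  Real.log (1 + γ * x w) + Real.log (g (z w))

/-- The difference of the log-means under `(γ₀, g₀)` and `(γ, g)`, with time rescaled from `[0, Δ]`
to `[0, 1]`. -/
noncomputable def logResidual (Δ : ℝ) (x z : ℝ → ℝ) (γ₀ : ℝ) (g₀ : ℝ → ℝ) (γ : ℝ) (g : ℝ → ℝ)
    (t : ℝ) : ℝ :=
  logMean x z γ₀ g₀ (Δ * t) - logMean x z γ g (Δ * t)

lemma Qlim_eq_integral_sq_logResidual {Δ : ℝ} (hΔ : Δ ≠ 0) (γ₀ γ : ℝ) (x z g₀ g : ℝ → ℝ) :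
    Qlim Δ γ₀ x z g₀ γ g = ∫ t in (0 : ℝ)..1, logResidual Δ x z γ₀ g₀ γ g t ^ 2 := by
  have hscale := intervalIntegral.integral_comp_mul_left (a := 0) (b := 1)
    (fun w ↦ (logMean x z γ₀ g₀ w - logMean x z γ g w) ^ 2) hΔ
  rw [mul_zero, mul_one, smul_eq_mul] at hscale
  simp_rw [logResidual]
  rw [hscale, Qlim, one_div]
  congr! 3 with w
  simp only [logMean]
  ring

lemma Qemp_eq_mean_sq_logResidual_add {Ω : Type*} (Δ γ₀ γ : ℝ) (x z g₀ g : ℝ → ℝ)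
    (ε : ℤ → Ω → ℝ) (n : ℕ) (ω : Ω) :
    Qemp Δ γ₀ x z g₀ ε n γ g ω =
      (∑ j ∈ Finset.range n,
        (logResidual Δ x z γ₀ g₀ γ g ((j + 1) / n) + ε (j + 1) ω) ^ 2) / n := by
  rw [Qemp, one_div_mul_eq_div, ← Finset.Ico_add_one_right_eq_Icc, Finset.sum_Ico_eq_sum_range,
    Nat.add_sub_cancel]
  congr! 3 with j
  rw [logResidual, logMean, logMean,
    show ((1 + j : ℕ) : ℝ) * Δ / n = Δ * ((j + 1) / n) by push_cast; ring,
    show ((1 + j : ℕ) : ℤ) = j + 1 by push_cast; ring]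
  ring

lemma one_add_mul_pos {a b γ s : ℝ} (ha : 0 < a) (hb : 0 < b) (hγ : γ ∈ Icc (-(1 / b)) (1 / a))
    (hs : s ∈ Ioo (-a) b) : 0 < 1 + γ * s := by
  have hγa : γ * a ≤ 1 := (le_div_iff₀ ha).1 hγ.2
  have hγb : -1 ≤ γ * b := by
    have := hγ.1
    rwa [← neg_div, div_le_iff₀ hb] at this
  obtain hγ₀ | rfl | hγ₀ := lt_trichotomy γ 0
  · nlinarith [hs.2]
  · simp
  · nlinarith [hs.1]

variable {ι : Type*} {Γ S T : Set ℝ} {x z : ℝ → ℝ} {γ : ι → ℝ} {g : ι → ℝ → ℝ} {m M : ℝ}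

lemma continuousOn_log_add_log {X Y : Set ℝ} (hX : ∀ c ∈ Γ, ∀ s ∈ X, 0 < 1 + c * s)
    (hY : ∀ y ∈ Y, 0 < y) :
    ContinuousOn (fun p : ℝ × ℝ × ℝ ↦ Real.log (1 + p.1 * p.2.1) + Real.log p.2.2)
      (Γ ×ˢ X ×ˢ Y) :=
  (ContinuousOn.log (by fun_prop) fun p hp ↦ (hX _ hp.1 _ hp.2.1).ne').add
    (ContinuousOn.log (by fun_prop) fun p hp ↦ (hY _ hp.2.2).ne')

lemma exists_forall_abs_logMean_le (hΓ : IsCompact Γ) (hS : IsCompact S) (hx : ContinuousOn x S)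
    (hpos : ∀ c ∈ Γ, ∀ w ∈ S, 0 < 1 + c * x w) (hz : MapsTo z S T) (hm : 0 < m)
    (hγ : ∀ i, γ i ∈ Γ) (hg : ∀ i, MapsTo (g i) T (Icc m M)) :
    ∃ B, ∀ i, ∀ w ∈ S, |logMean x z (γ i) (g i) w| ≤ B := by
  obtain ⟨B, hB⟩ := (hΓ.prod ((hS.image_of_continuousOn hx).prod isCompact_Icc)
    ).exists_bound_of_continuousOn (continuousOn_log_add_log (Y := Icc m M)
      (fun c hc ↦ forall_mem_image.2 (hpos c hc)) fun y hy ↦ hm.trans_le hy.1)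
  exact ⟨B, fun i w hw ↦ hB (γ i, x w, g i (z w)) ⟨hγ i, mem_image_of_mem x hw, hg i (hz hw)⟩⟩

lemma uniformEquicontinuousOn_logMean (hΓ : IsCompact Γ) (hS : IsCompact S) (hx : ContinuousOn x S)
    (hpos : ∀ c ∈ Γ, ∀ w ∈ S, 0 < 1 + c * x w) (hz : ContinuousOn z S) (hzT : MapsTo z S T)
    (hm : 0 < m) (hγ : ∀ i, γ i ∈ Γ) (hg : ∀ i, MapsTo (g i) T (Icc m M))
    (hgT : UniformEquicontinuousOn g T) :
    UniformEquicontinuousOn (fun i ↦ logMean x z (γ i) (g i)) S := by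
  have hlog := (hΓ.prod ((hS.image_of_continuousOn hx).prod isCompact_Icc)
    ).uniformContinuousOn_of_continuous (continuousOn_log_add_log (Y := Icc m M)
      (fun c hc ↦ forall_mem_image.2 (hpos c hc)) fun y hy ↦ hm.trans_le hy.1)
  have hγ' : UniformEquicontinuousOn (fun i (_ : ℝ) ↦ γ i) S := fun V hV ↦
    .of_forall fun _ _ ↦ refl_mem_uniformity hV
  have htriple := uniformEquicontinuousOn_prodMk hγ' <| uniformEquicontinuousOn_prodMk
    (uniformEquicontinuousOn_const (hS.uniformContinuousOn_of_continuous hx))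
    (uniformEquicontinuousOn_comp_right hgT (hS.uniformContinuousOn_of_continuous hz) hzT)
  exact uniformEquicontinuousOn_comp_left hlog htriple fun i w hw ↦
    ⟨hγ i, mem_image_of_mem x hw, hg i (hzT hw)⟩

lemma uniformEquicontinuousOn_logResidual {Δ γ₀ : ℝ} {g₀ : ℝ → ℝ} (hΔ : 0 ≤ Δ)
    (h₀ : UniformContinuousOn (logMean x z γ₀ g₀) (Icc 0 Δ))
    (hF : UniformEquicontinuousOn (fun i ↦ logMean x z (γ i) (g i)) (Icc 0 Δ)) :
    UniformEquicontinuousOn (fun i ↦ logResidual Δ x z γ₀ g₀ (γ i) (g i)) (Icc 0 1) := by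
  have hscale : MapsTo (Δ * ·) (Icc 0 1) (Icc 0 Δ) := fun t ht ↦
    ⟨mul_nonneg hΔ ht.1, mul_le_of_le_one_right hΔ ht.2⟩
  have hdiff : UniformEquicontinuousOn
      (fun i w ↦ logMean x z γ₀ g₀ w - logMean x z (γ i) (g i) w) (Icc 0 Δ) :=
    uniformEquicontinuousOn_comp_left (uniformContinuous_sub.uniformContinuousOn (s := univ))
      (uniformEquicontinuousOn_prodMk (uniformEquicontinuousOn_const h₀) hF)
      fun _ ↦ mapsTo_univ _ _
  have hrescaled := uniformEquicontinuousOn_comp_right hdiff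
    (isCompact_Icc.uniformContinuousOn_of_continuous (by fun_prop)) hscale
  exact hrescaled

theorem tendstoUniformlyOn_Qemp {Ω : Type*} {Δ v γ₀ : ℝ} {𝒢 : Set (ℝ → ℝ)} {g₀ : ℝ → ℝ}
    {ε : ℤ → Ω → ℝ} {ω : Ω} (hΔ : 0 < Δ) (hΓ : IsCompact Γ) (hx : ContinuousOn x (Icc 0 Δ))
    (hpos : ∀ c ∈ Γ, ∀ w ∈ Icc 0 Δ, 0 < 1 + c * x w) (hz : ContinuousOn z (Icc 0 Δ))
    (hzT : MapsTo z (Icc 0 Δ) T) (hm : 0 < m) (h𝒢 : ∀ g ∈ 𝒢, MapsTo g T (Icc m M))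
    (h𝒢T : UniformEquicontinuousOn ((↑) : 𝒢 → ℝ → ℝ) T) (hγ₀ : γ₀ ∈ Γ) (hg₀ : g₀ ∈ 𝒢)
    (hε : Tendsto (fun n : ℕ ↦ (∑ i ∈ Finset.range n, ε (i + 1) ω) / n) atTop (𝓝 0))
    (hε₂ : Tendsto (fun n : ℕ ↦ (∑ i ∈ Finset.range n, ε (i + 1) ω ^ 2) / n) atTop (𝓝 v)) :
    TendstoUniformlyOn (fun n p ↦ Qemp Δ γ₀ x z g₀ ε n p.1 p.2 ω)
      (fun p ↦ Qlim Δ γ₀ x z g₀ p.1 p.2 + v) atTop (Γ ×ˢ 𝒢) := by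
  have hF : UniformEquicontinuousOn (fun p : Γ ×ˢ 𝒢 ↦ logMean x z p.1.1 p.1.2) (Icc 0 Δ) :=
    uniformEquicontinuousOn_logMean hΓ isCompact_Icc hx hpos hz hzT hm (fun p ↦ p.2.1)
      (fun p ↦ h𝒢 _ p.2.2) (h𝒢T.comp fun p : Γ ×ˢ 𝒢 ↦ ⟨p.1.2, p.2.2⟩)
  obtain ⟨B, hB⟩ := exists_forall_abs_logMean_le hΓ isCompact_Icc hx hpos hzT hm
    (fun p : Γ ×ˢ 𝒢 ↦ p.2.1) fun p ↦ h𝒢 _ p.2.2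
  have hbase : ((γ₀, g₀) : ℝ × (ℝ → ℝ)) ∈ Γ ×ˢ 𝒢 := ⟨hγ₀, hg₀⟩
  have hbound (p : Γ ×ˢ 𝒢) (t : ℝ) (ht : t ∈ Icc (0 : ℝ) 1) :
      |logResidual Δ x z γ₀ g₀ p.1.1 p.1.2 t| ≤ B + B := by
    have hw : Δ * t ∈ Icc 0 Δ := ⟨mul_nonneg hΔ.le ht.1, mul_le_of_le_one_right hΔ.le ht.2⟩
    exact (abs_sub _ _).trans (add_le_add (hB ⟨_, hbase⟩ _ hw) (hB p _ hw))
  have hlim := tendstoUniformly_mean_sq_add (uniformEquicontinuousOn_logResidual hΔ.le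
    (hF.uniformContinuousOn ⟨_, hbase⟩) hF) hbound hε hε₂
  rw [tendstoUniformlyOn_iff_tendstoUniformly_comp_coe]
  simpa only [Function.comp_def, Qemp_eq_mean_sq_logResidual_add,
    Qlim_eq_integral_sq_logResidual hΔ.ne'] using hlim

end Model

section Conclusion

variable {Ω : Type*} [MeasurableSpace Ω] {μ : Measure Ω} {U ε : ℤ → Ω → ℝ} {φ s : ℝ}

lemma eq_mul_add_of_hasSum {u e : ℤ → ℝ}
    (he : ∀ i : ℤ, HasSum (fun j : ℕ ↦ φ ^ j * u (i - j)) (e i)) (i : ℤ) :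
    e (i + 1) = φ * e i + u (i + 1) := by
  have hterm (j : ℕ) : φ ^ (j + 1) * u (i + 1 - (j + 1 : ℕ)) = φ * (φ ^ j * u (i - j)) := by
    push_cast
    rw [add_sub_add_right_eq_sub]
    ring
  have htail := (hasSum_nat_add_iff' 1).2 (he (i + 1))
  simp_rw [hterm] at htail
  rw [← htail.unique ((he i).mul_left φ)]
  simp

lemma ae_tendsto_means_succ_of_arOne_noise (hφ : |φ| < 1) (hU : ∀ j, Measurable (U j))
    (hindep : iIndepFun U μ) (hident : ∀ j, μ.map (U j) = μ.map (U 0)) (hU₂ : MemLp (U 0) 2 μ)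
    (hmean : ∫ ω, U 0 ω ∂μ = 0) (hvar : ∫ ω, U 0 ω ^ 2 ∂μ = s)
    (hrec : ∀ᵐ ω ∂μ, ∀ i : ℕ, ε (i + 1) ω = φ * ε i ω + U (i + 1) ω) :
    ∀ᵐ ω ∂μ, Tendsto (fun n : ℕ ↦ (∑ i ∈ Finset.range n, ε (i + 1) ω) / n) atTop (𝓝 0) ∧
      Tendsto (fun n : ℕ ↦ (∑ i ∈ Finset.range n, ε (i + 1) ω ^ 2) / n) atTop
        (𝓝 (s / (1 - φ ^ 2))) := by
  have hlaw (i j : ℤ) : IdentDistrib (U i) (U j) μ μ :=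
    ⟨(hU i).aemeasurable, (hU j).aemeasurable, (hident i).trans (hident j).symm⟩
  have hinj : Function.Injective fun n : ℕ ↦ (n : ℤ) + 2 :=
    (add_left_injective 2).comp Nat.cast_injective
  have hsq : IdentDistrib (fun ω ↦ U 2 ω ^ 2) (fun ω ↦ U 0 ω ^ 2) μ μ :=
    (hlaw 2 0).comp (u := fun x ↦ x ^ 2) (by fun_prop)
  refine ae_tendsto_means_of_arOne_noise (U := fun n ↦ U (n + 2)) (e := fun i ↦ ε (i + 1)) hφ
    (fun n ↦ hU _) (hindep.precomp hinj) (fun n ↦ hlaw _ _) ((hlaw _ _).memLp_iff.2 hU₂)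
    ((hlaw _ _).integral_eq.trans hmean) (hsq.integral_eq.trans hvar) ?_
  filter_upwards [hrec] with ω hω n
  have := hω (n + 1)
  push_cast at this ⊢
  rw [this, add_assoc]
  rfl

theorem stmt4_general {Δ m M γ₀ : ℝ} {x z g₀ : ℝ → ℝ} {Γ T : Set ℝ} {𝒢 : Set (ℝ → ℝ)} (hΔ : 0 < Δ)
    (hx : ContinuousOn x (Icc 0 Δ)) (hz : ContinuousOn z (Icc 0 Δ)) (hzT : MapsTo z (Icc 0 Δ) T)
    (hU : ∀ j, Measurable (U j)) (hindep : iIndepFun U μ)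
    (hident : ∀ j, μ.map (U j) = μ.map (U 0)) (hU₂ : MemLp (U 0) 2 μ)
    (hmean : ∫ ω, U 0 ω ∂μ = 0) (hvar : ∫ ω, U 0 ω ^ 2 ∂μ = s) (hφ : |φ| < 1)
    (hrec : ∀ᵐ ω ∂μ, ∀ i : ℕ, ε (i + 1) ω = φ * ε i ω + U (i + 1) ω)
    (hΓ : IsCompact Γ) (hpos : ∀ γ ∈ Γ, ∀ w ∈ Icc 0 Δ, 0 < 1 + γ * x w) (hγ₀ : γ₀ ∈ Γ)
    (hm : 0 < m) (h𝒢 : ∀ g ∈ 𝒢, MapsTo g T (Icc m M))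
    (h𝒢T : UniformEquicontinuousOn ((↑) : 𝒢 → ℝ → ℝ) T) (hg₀ : g₀ ∈ 𝒢) :
    ∀ᵐ ω ∂μ, ∀ e > (0 : ℝ), ∃ N : ℕ, ∀ n ≥ N, ∀ γ ∈ Γ, ∀ g ∈ 𝒢,
      |Qemp Δ γ₀ x z g₀ ε n γ g ω - Qlim Δ γ₀ x z g₀ γ g - s / (1 - φ ^ 2)| < e := by
  filter_upwards [ae_tendsto_means_succ_of_arOne_noise hφ hU hindep hident hU₂ hmean hvar hrec]
    with ω ⟨hε, hε₂⟩ e he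
  obtain ⟨N, hN⟩ := eventually_atTop.1 <| Metric.tendstoUniformlyOn_iff.1
    (tendstoUniformlyOn_Qemp hΔ hΓ hx hpos hz hzT hm h𝒢 h𝒢T hγ₀ hg₀ hε hε₂) e he
  refine ⟨N, fun n hn γ hγ g hg ↦ ?_⟩
  rw [sub_sub, ← Real.dist_eq, dist_comm]
  exact hN n hn (γ, g) ⟨hγ, hg⟩

end Conclusion

/-- Theorem 1: Almost surely, `Q_n` converges uniformly on `Γ × 𝒢` to
`Q + σ²/(1-φ²)`. -/
theorem stmt4
    {Ω : Type*} [MeasurableSpace Ω] (μ : Measure Ω) [IsProbabilityMeasure μ]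
    (Δ A xm xM : ℝ) (hΔ : 0 < Δ) (hA : 0 < A) (hxm : 0 < xm) (hxM : 0 < xM)
    (x z : ℝ → ℝ)
    (hxcont : ContinuousOn x (Icc 0 Δ))
    (hxrange : ∀ w ∈ Icc (0 : ℝ) Δ, x w ∈ Ioo (-xm) xM)
    (hzcont : ContinuousOn z (Icc 0 Δ))
    (hzrange : ∀ w ∈ Icc (0 : ℝ) Δ, z w ∈ Icc 0 A)
    (hzmono : StrictMonoOn z (Icc 0 Δ))
    (U : ℤ → Ω → ℝ) (hUmeas : ∀ j, Measurable (U j))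
    (hUindep : iIndepFun U μ)
    (hUident : ∀ j, μ.map (U j) = μ.map (U 0))
    (σ : ℝ) (hσ : 0 < σ)
    (hUmean : ∫ ω, U 0 ω ∂μ = 0)
    (hUvar : ∫ ω, (U 0 ω) ^ 2 ∂μ = σ ^ 2)
    (hU8 : Integrable (fun ω => (U 0 ω) ^ 8) μ)
    (φ : ℝ) (hφ0 : φ ≠ 0) (hφ1 : |φ| < 1)
    (ε : ℤ → Ω → ℝ) (hεmeas : ∀ i, Measurable (ε i))
    (hεsum : ∀ᵐ ω ∂μ, ∀ i : ℤ, HasSum (fun j : ℕ => φ ^ j * U (i - (j : ℤ)) ω) (ε i ω))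
    (γ₀ : ℝ) (hγ₀ : γ₀ ∈ Ioo (-(1 / xM)) (1 / xm))
    (m M L : ℝ) (hm : 0 < m) (hmM : m < M) (hL : 0 < L)
    (g₀ : ℝ → ℝ) (hg₀ : inG A m M L g₀) :
    ∀ᵐ ω ∂μ, ∀ e > (0 : ℝ), ∃ N : ℕ, ∀ n ≥ N,
      ∀ γ ∈ Icc (-(1 / xM)) (1 / xm), ∀ g : ℝ → ℝ, inG A m M L g →
        |Qemp Δ γ₀ x z g₀ ε n γ g ω - Qlim Δ γ₀ x z g₀ γ g - σ ^ 2 / (1 - φ ^ 2)| < e := by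
  have hU₂ : MemLp (U 0) 2 μ := (memLp_two_iff_integrable_sq (hUmeas 0).aestronglyMeasurable).2
    (.of_integral_ne_zero (hUvar ▸ (pow_pos hσ 2).ne'))
  have hlip : UniformEquicontinuousOn ((↑) : {g | inG A m M L g} → ℝ → ℝ) (Icc 0 A) :=
    LipschitzOnWith.uniformEquicontinuousOn _ L.toNNReal fun g ↦ g.2.2.2.2
  exact stmt4_general hΔ hxcont hzcont hzrange hUmeas hUindep hUident hU₂ hUmean hUvar hφ1
    (hεsum.mono fun ω h i ↦ eq_mul_add_of_hasSum (u := (U · ω)) (e := (ε · ω)) h i) isCompact_Icc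
    (fun γ hγ w hw ↦ one_add_mul_pos hxm hxM hγ (hxrange w hw)) (Ioo_subset_Icc_self hγ₀) hm
    (fun g hg ↦ hg.2.2.1) hlip hg₀
end
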